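/- Let Γ be a non-elementary hyperbolic group and μ a symmetric probability measure on Γ whose support generates Γ and which has an exponential moment (there is λ>0 with Σ_γ e^{λ d_w(e,γ)} μ(γ) < ∞ for a word metric d_w). Then the Green metric d_G belongs to D(Γ) (i.e. is hyperbolic and quasi-isometric to a word metric) if and only if for every r ≥ 0 there exists a constant C(r) such that F(x,y) ≤ C(r) F(x,v) F(v,y) whenever x, y, v are vertices of a locally finite Cayley graph of Γ and v lies at distance at most r from a geodesic segment between x and y. -/

import Mathlib

open Filter MeasureTheory Topology Metric Set
open scoped ENNReal

noncomputable section

namespace GHM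

/-! ### Coarse geometry of distance functions -/

/-- The Gromov product `(x|y)_w` of `x` and `y` seen from `w`, for a distance function `d`. -/
def gromov {X : Type*} (d : X → X → ℝ) (w x y : X) : ℝ :=
  (d x w + d y w - d x y) / 2

/-- `d` is `δ`-hyperbolic (four point condition on Gromov products). -/
def IsHyperbolicWith {X : Type*} (d : X → X → ℝ) (δ : ℝ) : Prop :=
  ∀ w x y z : X, min (gromov d w x y) (gromov d w x z) - δ ≤ gromov d w y z

/-- `d` is Gromov hyperbolic. -/
def IsHyperbolic {X : Type*} (d : X → X → ℝ) : Prop :=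
  ∃ δ : ℝ, 0 ≤ δ ∧ IsHyperbolicWith d δ

/-- `d` is a genuine metric. -/
structure IsMetricFun {X : Type*} (d : X → X → ℝ) : Prop where
  refl : ∀ x, d x x = 0
  pos : ∀ x y, x ≠ y → 0 < d x y
  symm : ∀ x y, d x y = d y x
  triangle : ∀ x y z, d x z ≤ d x y + d y z

/-- `f` is a `(Λ,c)`-quasi-isometric embedding from `(X,dX)` to `(Y,dY)`. -/
def QIEmbed {X Y : Type*} (dX : X → X → ℝ) (dY : Y → Y → ℝ)
    (f : X → Y) (Λ c : ℝ) : Prop :=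
  ∀ x x' : X, dX x x' / Λ - c ≤ dY (f x) (f x') ∧ dY (f x) (f x') ≤ Λ * dX x x' + c

/-- `(X,dX)` and `(Y,dY)` are quasi-isometric. -/
def QuasiIsometric {X Y : Type*} (dX : X → X → ℝ) (dY : Y → Y → ℝ) : Prop :=
  ∃ (f : X → Y) (Λ c C : ℝ), 1 ≤ Λ ∧ 0 ≤ c ∧ 0 ≤ C ∧
    QIEmbed dX dY f Λ c ∧ ∀ y : Y, ∃ x : X, dY (f x) y ≤ C

variable {G : Type*} [Group G]

/-- Word length of `g` with respect to the (symmetrized) finite set `S`. -/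
def wordLength (S : Finset G) (g : G) : ℕ :=
  sInf {n : ℕ | ∃ l : List G, l.length = n ∧ (∀ a ∈ l, a ∈ S ∨ a⁻¹ ∈ S) ∧ l.prod = g}

/-- The word metric associated with a finite generating set `S`. -/
def wordDist (S : Finset G) (x y : G) : ℝ := wordLength S (x⁻¹ * y)

/-- `S` generates the group. -/
def Generates (S : Finset G) : Prop := Subgroup.closure (S : Set G) = ⊤

/-- The standard metric on `ℤ`. -/
def intDist (m n : ℤ) : ℝ := |(m : ℝ) - (n : ℝ)|

/-- `G` is a non-elementary hyperbolic group: finitely generated, its word metrics are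
Gromov hyperbolic, it is infinite, and it is not quasi-isometric to `ℤ`. -/
def NonElemHyperbolic (G : Type*) [Group G] : Prop :=
  Infinite G ∧ (∃ S : Finset G, Generates S) ∧
    ∀ S : Finset G, Generates S →
      IsHyperbolic (wordDist S) ∧ ¬ QuasiIsometric (wordDist S) intDist

/-- `d` is invariant under left translations. -/
def LeftInvariant (d : G → G → ℝ) : Prop := ∀ g x y : G, d (g * x) (g * y) = d x y

/-- `d` belongs to the class `𝒟(Γ)`: it is a left-invariant Gromov hyperbolic metric on the
group, quasi-isometric to a word metric of a finite generating set. -/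
def MemD (d : G → G → ℝ) : Prop :=
  IsMetricFun d ∧ LeftInvariant d ∧ IsHyperbolic d ∧
    ∃ S : Finset G, Generates S ∧ QuasiIsometric d (wordDist S)

/-! ### Random walks -/

/-- `μ` is (the density of) a probability measure on the (countable) group. -/
def IsProbDensity (μ : G → ℝ) : Prop := (∀ g, 0 ≤ μ g) ∧ HasSum μ 1

/-- `μ` is symmetric. -/
def IsSymmetric (μ : G → ℝ) : Prop := ∀ g : G, μ g⁻¹ = μ g

/-- The support of `μ` generates `G`. -/
def GeneratesSupp (μ : G → ℝ) : Prop := Subgroup.closure {g : G | μ g ≠ 0} = ⊤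

open scoped Classical in
/-- Convolution powers `μ^n` of `μ`. -/
def convPow (μ : G → ℝ) : ℕ → G → ℝ
  | 0 => fun g => if g = 1 then 1 else 0
  | n + 1 => fun g => ∑' y : G, convPow μ n y * μ (y⁻¹ * g)

/-- The Green function `G(x,y) = ∑_n μ^n(x⁻¹y)`. -/
def greenFn (μ : G → ℝ) (x y : G) : ℝ := ∑' n : ℕ, convPow μ n (x⁻¹ * y)

/-- The random walk is transient, i.e. `G(e,e) = ∑_n μ^n(e) < ∞`. -/
def Transient (μ : G → ℝ) : Prop := Summable fun n : ℕ => convPow μ n (1 : G)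

/-- Successive positions of a walk started at `x` with increments `l`. -/
def walkPositions (x : G) (l : List G) : List G := l.scanl (fun p a => p * a) x

/-- The increments `l` describe a trajectory from `x` which hits `y` for the first time at
its final position. -/
def IsFirstHitPath (x y : G) (l : List G) : Prop :=
  (walkPositions x l).getLast? = some y ∧ y ∉ (walkPositions x l).dropLast

/-- `F(x,y)`: the probability that the `μ`-random walk started at `x` ever hits `y`. -/
def hitProb (μ : G → ℝ) (x y : G) : ℝ :=
  ∑' l : {l : List G // IsFirstHitPath x y l}, ((l : List G).map μ).prod

/-- The Green metric `d_G(x,y) = - log F(x,y)`. -/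
def greenDist (μ : G → ℝ) (x y : G) : ℝ := - Real.log (hitProb μ x y)

/-- `μ` has a finite first moment with respect to `d`. -/
def FiniteFirstMoment (d : G → G → ℝ) (μ : G → ℝ) : Prop :=
  Summable fun g : G => d 1 g * μ g

/-- `μ` has an exponential moment with respect to `d`. -/
def HasExpMoment (d : G → G → ℝ) (μ : G → ℝ) : Prop :=
  ∃ lam : ℝ, 0 < lam ∧ Summable fun g : G => Real.exp (lam * d 1 g) * μ g

/-- The entropy `H(μ^n) = -∑_γ μ^n(γ) log μ^n(γ)` of the `n`-th convolution power. -/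
def entropyAt (μ : G → ℝ) (n : ℕ) : ℝ :=
  - ∑' g : G, convPow μ n g * Real.log (convPow μ n g)

/-- `h` is the asymptotic entropy of the walk. -/
def HasEntropy (μ : G → ℝ) (h : ℝ) : Prop :=
  Tendsto (fun n : ℕ => entropyAt μ n / n) atTop (𝓝 h)

/-- `v` is the logarithmic volume growth of `(G,d)` (seen from the identity). -/
def HasGrowth (d : G → G → ℝ) (v : ℝ) : Prop :=
  Filter.limsup (fun R : ℝ => Real.log (Nat.card {g : G // d 1 g ≤ R}) / R) atTop = v

/-- The position `Z_n = ω_0 ω_1 ⋯ ω_{n-1}` of the random walk at time `n`, given the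
sequence of increments `ω`. -/
def walkPos (n : ℕ) (ω : ℕ → G) : G := ((List.range n).map ω).prod

/-- `P` is the law on the space of increment sequences of an i.i.d. sequence of law `μ`:
cylinders have product measure.  (This characterizes the path measure of the random walk.) -/
def IsWalkMeasure [MeasurableSpace G] (μ : G → ℝ) (P : Measure (ℕ → G)) : Prop :=
  IsProbabilityMeasure P ∧
    ∀ (n : ℕ) (g : Fin n → G),
      P {ω : ℕ → G | ∀ i : Fin n, ω (i : ℕ) = g i} = ∏ i : Fin n, ENNReal.ofReal (μ (g i))

/-! ### The Gromov boundary, visual metrics, harmonic and quasiconformal measures -/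

/-- A sequence tends to infinity if Gromov products (at the base point `1`) go to `∞`. -/
def TendstoInfinity (d : G → G → ℝ) (u : ℕ → G) : Prop :=
  Tendsto (fun p : ℕ × ℕ => gromov d 1 (u p.1) (u p.2)) atTop atTop

/-- A realization of the Gromov boundary of `(G,d)` as an abstract type `B`:
`conv u b` means that the sequence `u` converges at infinity to the boundary point `b`.
The group acts on its boundary by `smul`. -/
structure BoundaryData (G : Type*) [Group G] (d : G → G → ℝ) (B : Type*) where
  conv : (ℕ → G) → B → Prop
  smul : G → B → B
  conv_unique : ∀ u b b', conv u b → conv u b' → b = b'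
  exists_conv : ∀ u, TendstoInfinity d u → ∃ b, conv u b
  conv_tendstoInfinity : ∀ u b, conv u b → TendstoInfinity d u
  conv_iff : ∀ u v b, conv u b →
    (conv v b ↔ Tendsto (fun n => gromov d 1 (u n) (v n)) atTop atTop)
  conv_surj : ∀ b, ∃ u, conv u b
  smul_conv : ∀ (γ : G) (u) (b), conv u b → conv (fun n => γ * u n) (smul γ b)

/-- Asymptotic Gromov product of two sequences. -/
def seqGromov (d : G → G → ℝ) (u v : ℕ → G) : ℝ :=
  Filter.liminf (fun n => gromov d 1 (u n) (v n)) atTop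

/-- The metric of `B` is a visual metric of parameter `ε` (with comparison constant `C`)
for the hyperbolic distance `d` on the group:  `dist(a,b) ≍ exp(-ε (a|b))`. -/
def IsVisualMetric {B : Type*} [MetricSpace B] (d : G → G → ℝ)
    (bd : BoundaryData G d B) (ε C : ℝ) : Prop :=
  0 < ε ∧ 0 < C ∧
    ∀ u v b b', bd.conv u b → bd.conv v b' → b ≠ b' →
      dist b b' ≤ C * Real.exp (-ε * seqGromov d u v) ∧
      Real.exp (-ε * seqGromov d u v) ≤ C * dist b b'

/-- `ν` is the harmonic measure of the random walk of law `μ` on the boundary `B`: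
it is the law of the almost sure limit `Z_∞` of the walk on the boundary. -/
def IsHarmonicMeasure {B : Type*} [MeasurableSpace G] [MeasurableSpace B]
    (d : G → G → ℝ) (bd : BoundaryData G d B) (μ : G → ℝ)
    (P : Measure (ℕ → G)) (ν : Measure B) : Prop :=
  IsWalkMeasure μ P ∧
    ∃ Zinf : (ℕ → G) → B, Measurable Zinf ∧
      (∀ᵐ ω ∂P, bd.conv (fun n => walkPos n ω) (Zinf ω)) ∧ ν = P.map Zinf

/-- Busemann function `β_b(x,y)` of the boundary point `b`. -/
def busemann {B : Type*} (d : G → G → ℝ) (bd : BoundaryData G d B)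
    (x y : G) (b : B) : ℝ :=
  sSup {t : ℝ | ∃ u, bd.conv u b ∧
    t = Filter.limsup (fun n => d x (u n) - d y (u n)) atTop}

/-- The image measure `γ^*ρ`, `γ^*ρ(A) = ρ(γA)`. -/
def actPush {B : Type*} [MeasurableSpace B] {d : G → G → ℝ}
    (bd : BoundaryData G d B) (γ : G) (ρ : Measure B) : Measure B :=
  ρ.map (bd.smul γ⁻¹)

/-- `ρ` is a quasiconformal measure on the boundary for `(G,d)` of logarithmic growth
parameter `v`: `γ^*ρ` and `ρ` are mutually absolutely continuous, with density
`dγ^*ρ/dρ ≍ exp (v β_b(1,γ⁻¹))` (uniformly in `γ`). -/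
def IsQuasiconformalMeasure {B : Type*} [MeasurableSpace B] {d : G → G → ℝ}
    (bd : BoundaryData G d B) (ρ : Measure B) (v : ℝ) : Prop :=
  ∃ C : ℝ, 0 < C ∧ ∀ γ : G,
    actPush bd γ ρ ≪ ρ ∧ ρ ≪ actPush bd γ ρ ∧
      ∀ᵐ b ∂ρ,
        (actPush bd γ ρ).rnDeriv ρ b
            ≤ ENNReal.ofReal (C * Real.exp (v * busemann d bd 1 γ⁻¹ b)) ∧
        ENNReal.ofReal (C⁻¹ * Real.exp (v * busemann d bd 1 γ⁻¹ b))
            ≤ (actPush bd γ ρ).rnDeriv ρ b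

/-- `ν` is Ahlfors regular of dimension `α`: `ν(B(b,r)) ≍ r^α`. -/
def AhlforsRegularOfDim {B : Type*} [MetricSpace B] [MeasurableSpace B]
    (ν : Measure B) (α : ℝ) : Prop :=
  ∃ C : ℝ, 0 < C ∧ ∀ (b : B) (r : ℝ), 0 < r → r ≤ Metric.diam (Set.univ : Set B) →
    ENNReal.ofReal (C⁻¹ * r ^ α) ≤ ν (Metric.ball b r) ∧
      ν (Metric.ball b r) ≤ ENNReal.ofReal (C * r ^ α)

/-- The Hausdorff dimension of a measure: the infimum of the Hausdorff dimensions of sets of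
full measure. -/
def measureDim {B : Type*} [EMetricSpace B] [MeasurableSpace B] (ν : Measure B) : ℝ≥0∞ :=
  ⨅ (A : Set B) (_ : ν Aᶜ = 0), dimH A

/-! ### Word geodesics -/

/-- `p 0, …, p n` is a geodesic segment for the word metric of `S`. -/
def IsWordGeodesic (S : Finset G) (n : ℕ) (p : ℕ → G) : Prop :=
  ∀ i j : ℕ, i ≤ n → j ≤ n → wordDist S (p i) (p j) = |(i : ℝ) - (j : ℝ)|

/-- `v` lies within distance `r` of some word geodesic segment from `x` to `y`. -/
def NearWordGeodesic (S : Finset G) (x y v : G) (r : ℝ) : Prop :=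
  ∃ (n : ℕ) (p : ℕ → G), IsWordGeodesic S n p ∧ p 0 = x ∧ p n = y ∧
    ∃ i ≤ n, wordDist S v (p i) ≤ r

/-! ### Martin boundary -/

/-- The Martin kernel `K(x,y) = G(x,y)/G(e,y)`. -/
def martinKernel (μ : G → ℝ) (x y : G) : ℝ := greenFn μ x y / greenFn μ 1 y

/-- The embedding `y ↦ K(·,y)` of the group in `C(G)` (pointwise topology). -/
def martinMap (μ : G → ℝ) (y : G) : G → ℝ := fun x => martinKernel μ x y

/-- The Martin boundary: the boundary of the image of the group under the Martin embedding
in the space of functions with the topology of pointwise convergence. -/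
def martinBoundary (μ : G → ℝ) : Set (G → ℝ) :=
  closure (Set.range (martinMap μ)) \ Set.range (martinMap μ)

/-- `h` is a `μ`-harmonic function. -/
def IsHarmonicFn (μ : G → ℝ) (h : G → ℝ) : Prop :=
  ∀ x : G, h x = ∑' y : G, h y * μ (x⁻¹ * y)

/-- `h` is a minimal positive harmonic function. -/
def IsMinimalHarmonic (μ : G → ℝ) (h : G → ℝ) : Prop :=
  IsHarmonicFn μ h ∧ (∀ x, 0 < h x) ∧
    ∀ u : G → ℝ, IsHarmonicFn μ u → (∀ x, 0 ≤ u x) → (∀ x, u x ≤ h x) →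
      ∃ c : ℝ, u = fun x => c * h x

/-! ### Metric space versions (geodesic and quasiruled spaces) -/

/-- A geodesic metric space. -/
def IsGeodesicSpace (X : Type*) [MetricSpace X] : Prop :=
  ∀ x y : X, ∃ f : ℝ → X, f 0 = x ∧ f (dist x y) = y ∧
    ∀ s ∈ Set.Icc (0:ℝ) (dist x y), ∀ t ∈ Set.Icc (0:ℝ) (dist x y),
      dist (f s) (f t) = |s - t|

/-- `f : [a,b] → Y` is a `(Λ,c)`-quasigeodesic segment. -/
def IsQuasigeodesicOn {Y : Type*} [MetricSpace Y] (f : ℝ → Y) (a b Λ c : ℝ) : Prop :=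
  ∀ s ∈ Set.Icc a b, ∀ t ∈ Set.Icc a b,
    |s - t| / Λ - c ≤ dist (f s) (f t) ∧ dist (f s) (f t) ≤ Λ * |s - t| + c

/-- `f : [a,b] → Y` is a `τ`-quasiruler: Gromov products of triples along it are `≤ τ`. -/
def IsQuasirulerOn {Y : Type*} [MetricSpace Y] (f : ℝ → Y) (a b τ : ℝ) : Prop :=
  ∀ s t u : ℝ, s ∈ Set.Icc a b → t ∈ Set.Icc a b → u ∈ Set.Icc a b → s ≤ t → t ≤ u →
    dist (f s) (f t) + dist (f t) (f u) ≤ dist (f s) (f u) + 2 * τ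

/-- A quasiruled metric space: for some constants `(Λ,c,τ)` every pair of points is joined
by a `(Λ,c)`-quasigeodesic, and every `(Λ,c)`-quasigeodesic is a `τ`-quasiruler. -/
def Quasiruled (Y : Type*) [MetricSpace Y] : Prop :=
  ∃ Λ c τ : ℝ, 1 ≤ Λ ∧ 0 ≤ c ∧ 0 ≤ τ ∧
    (∀ x y : Y, ∃ (a b : ℝ) (f : ℝ → Y), a ≤ b ∧ f a = x ∧ f b = y ∧
      IsQuasigeodesicOn f a b Λ c) ∧
    ∀ (f : ℝ → Y) (a b : ℝ), IsQuasigeodesicOn f a b Λ c → IsQuasirulerOn f a b τ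

/-- A metric space is hyperbolic. -/
def HypSpace (Y : Type*) [MetricSpace Y] : Prop :=
  IsHyperbolic (fun x y : Y => dist x y)

/-- `f` is a quasi-isometry between metric spaces. -/
def MetricQI {X Y : Type*} [MetricSpace X] [MetricSpace Y] (f : X → Y) : Prop :=
  ∃ Λ c C : ℝ, 1 ≤ Λ ∧ 0 ≤ c ∧ 0 ≤ C ∧
    QIEmbed (fun a b : X => dist a b) (fun a b : Y => dist a b) f Λ c ∧
    ∀ y : Y, ∃ x : X, dist (f x) y ≤ C


/-! ### Word length -/

theorem wl_exists {S : Finset G} (hS : Generates S) (g : G) :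
    ∃ l : List G, l.length = wordLength S g ∧ (∀ a ∈ l, a ∈ S ∨ a⁻¹ ∈ S) ∧ l.prod = g := by
  have hne : {n : ℕ | ∃ l : List G, l.length = n ∧ (∀ a ∈ l, a ∈ S ∨ a⁻¹ ∈ S) ∧
      l.prod = g}.Nonempty := by
    have hg : g ∈ Subgroup.closure (S : Set G) := by rw [hS]; trivial
    rw [← Subgroup.mem_toSubmonoid, Subgroup.closure_toSubmonoid] at hg
    obtain ⟨l, hl, hp⟩ := Submonoid.exists_list_of_mem_closure hg
    exact ⟨l.length, l, rfl, by simpa using hl, hp⟩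
  exact Nat.sInf_mem hne

theorem wl_le {S : Finset G} (l : List G) (hl : ∀ a ∈ l, a ∈ S ∨ a⁻¹ ∈ S) :
    wordLength S l.prod ≤ l.length :=
  Nat.sInf_le ⟨l, rfl, hl, rfl⟩

theorem wl_one (S : Finset G) : wordLength S (1 : G) = 0 := by
  have := wl_le (S := S) ([] : List G) (by simp)
  simpa using this

theorem wl_mul {S : Finset G} (hS : Generates S) (g h : G) :
    wordLength S (g * h) ≤ wordLength S g + wordLength S h := by
  obtain ⟨l, h1, h2, h3⟩ := wl_exists hS g
  obtain ⟨m, k1, k2, k3⟩ := wl_exists hS h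
  have := wl_le (S := S) (l ++ m) (by
    intro a ha
    rcases List.mem_append.1 ha with h | h
    · exact h2 a h
    · exact k2 a h)
  simpa [h1, h3, k1, k3] using this

theorem wl_inv_le {S : Finset G} (hS : Generates S) (g : G) :
    wordLength S g⁻¹ ≤ wordLength S g := by
  obtain ⟨l, h1, h2, h3⟩ := wl_exists hS g
  have := wl_le (S := S) (l.map (fun x => x⁻¹)).reverse (by
    intro a ha
    simp only [List.mem_reverse, List.mem_map] at ha
    obtain ⟨b, hb, rfl⟩ := ha
    rw [inv_inv]
    exact (h2 b hb).symm)
  rw [← List.prod_inv_reverse] at this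
  simpa [h1, h3] using this

theorem wl_inv {S : Finset G} (hS : Generates S) (g : G) :
    wordLength S g⁻¹ = wordLength S g :=
  le_antisymm (wl_inv_le hS g) (by simpa using wl_inv_le hS g⁻¹)

theorem wl_eq_zero {S : Finset G} (hS : Generates S) {g : G} (h : wordLength S g = 0) : g = 1 := by
  obtain ⟨l, h1, _, h3⟩ := wl_exists hS g
  rw [h, List.length_eq_zero_iff] at h1
  simp [← h3, h1]

/-- Prefixes of a geodesic word. -/
theorem wl_geod {S : Finset G} (hS : Generates S) (g : G) :
    ∃ p : ℕ → G, p 0 = 1 ∧ p (wordLength S g) = g ∧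
      ∀ i j, i ≤ j → j ≤ wordLength S g → wordLength S ((p i)⁻¹ * p j) = j - i := by
  obtain ⟨l, h1, h2, h3⟩ := wl_exists hS g
  have hup : ∀ i j, i ≤ j → j ≤ wordLength S g →
      wordLength S (((l.take i).prod)⁻¹ * (l.take j).prod) ≤ j - i := by
    intro i j hij hj
    have e : (l.take j).prod = (l.take i).prod * ((l.take j).drop i).prod := by
      conv_lhs => rw [← List.prod_take_mul_prod_drop (l.take j) i]
      rw [List.take_take, min_eq_left hij]
    rw [e, inv_mul_cancel_left]
    refine (wl_le _ ?_).trans ?_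
    · intro a ha
      exact h2 a (List.mem_of_mem_take (List.mem_of_mem_drop ha))
    · simp only [List.length_drop, List.length_take]; omega
  refine ⟨fun i => (l.take i).prod, by simp, by simp [← h1, h3], ?_⟩
  intro i j hij hj
  refine le_antisymm (hup i j hij hj) ?_
  show j - i ≤ wordLength S (((l.take i).prod)⁻¹ * (l.take j).prod)
  have a1 := hup 0 i (Nat.zero_le _) (hij.trans hj)
  have a2 := hup j (wordLength S g) hj le_rfl
  have a3 : wordLength S g ≤ wordLength S (((l.take 0).prod)⁻¹ * (l.take i).prod) +
      (wordLength S (((l.take i).prod)⁻¹ * (l.take j).prod) +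
      wordLength S (((l.take j).prod)⁻¹ * (l.take (wordLength S g)).prod)) := by
    refine le_trans ?_ (Nat.add_le_add_left (wl_mul hS _ _) _)
    refine le_trans ?_ (wl_mul hS _ _)
    apply le_of_eq
    congr 1
    simp [← h1, h3]
  omega

theorem wl_ball_finite {S : Finset G} (hS : Generates S) (n : ℕ) :
    {g : G | wordLength S g ≤ n}.Finite := by
  classical
  induction n with
  | zero =>
    refine (Set.finite_singleton (1 : G)).subset ?_
    intro g hg
    exact wl_eq_zero hS (Nat.le_zero.1 hg)
  | succ n ih =>
    have hT : ((S : Set G) ∪ (S : Set G)⁻¹).Finite :=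
      S.finite_toSet.union S.finite_toSet.inv
    refine ((ih.mul hT).union ih).subset ?_
    intro g hg
    by_cases h : wordLength S g ≤ n
    · exact Or.inr h
    · left
      have hg' : wordLength S g = n + 1 := le_antisymm hg (by omega)
      obtain ⟨l, h1, h2, h3⟩ := wl_exists hS g
      rw [hg'] at h1
      have hne : l ≠ [] := by rintro rfl; simp at h1
      refine ⟨l.dropLast.prod, ?_, l.getLast hne, ?_, ?_⟩
      · refine (wl_le _ ?_).trans ?_
        · intro a ha; exact h2 a (List.mem_of_mem_dropLast ha)
        · simp [h1]
      · have := h2 _ (List.getLast_mem hne)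
        simpa using this
      · show l.dropLast.prod * l.getLast hne = g
        conv_rhs => rw [← h3, ← List.dropLast_append_getLast hne]
        simp

theorem wl_surj [Infinite G] {S : Finset G} (hS : Generates S) (n : ℕ) :
    ∃ g : G, wordLength S g = n := by
  obtain ⟨g, hg⟩ : ∃ g : G, ¬ wordLength S g ≤ n := by
    by_contra hc
    push Not at hc
    exact Set.infinite_univ ((wl_ball_finite hS n).subset (fun g _ => hc g))
  obtain ⟨p, p0, _, h⟩ := wl_geod hS g
  refine ⟨p n, ?_⟩
  have := h 0 n (Nat.zero_le _) (by omega)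
  simpa [p0] using this

/-- basic properties of a left-invariant pseudo-distance -/
structure LIM (d : G → G → ℝ) : Prop where
  refl : ∀ x, d x x = 0
  nonneg : ∀ x y, 0 ≤ d x y
  symm : ∀ x y, d x y = d y x
  triangle : ∀ x y z, d x z ≤ d x y + d y z
  inv : ∀ g x y : G, d (g * x) (g * y) = d x y

theorem wordDist_LIM {S : Finset G} (hS : Generates S) : LIM (wordDist S) where
  refl x := by simp [wordDist, wl_one]
  nonneg x y := by simp [wordDist]
  symm x y := by
    unfold wordDist
    rw [← wl_inv hS]; simp
  triangle x y z := by
    unfold wordDist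
    have := wl_mul hS (x⁻¹ * y) (y⁻¹ * z)
    have e : x⁻¹ * y * (y⁻¹ * z) = x⁻¹ * z := by group
    rw [e] at this
    exact_mod_cast this
  inv g x y := by simp [wordDist, mul_assoc]

theorem wordDist_geod {S : Finset G} (hS : Generates S) (x y : G) :
    ∃ (n : ℕ) (p : ℕ → G), IsWordGeodesic S n p ∧ p 0 = x ∧ p n = y ∧ wordDist S x y = n := by
  obtain ⟨p, p0, p1, h⟩ := wl_geod hS (x⁻¹ * y)
  have key : ∀ i j, i ≤ j → j ≤ wordLength S (x⁻¹ * y) →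
      wordDist S (x * p i) (x * p j) = |(i : ℝ) - (j : ℝ)| := by
    intro i j hij hj
    rw [(wordDist_LIM hS).inv, wordDist, h i j hij hj, abs_sub_comm, abs_of_nonneg]
    · push_cast [hij]; rfl
    · simpa using hij
  refine ⟨wordLength S (x⁻¹ * y), fun i => x * p i, ?_, by simp [p0], by simp [p1], rfl⟩
  intro i j hi hj
  rcases le_total i j with hij | hij
  · exact key i j hij hj
  · rw [(wordDist_LIM hS).symm, abs_sub_comm]; exact key j i hij hi

/-- four-point form of hyperbolicity -/
theorem hyp4 {X : Type*} {d : X → X → ℝ} {δ : ℝ} (h : IsHyperbolicWith d δ)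
    (hs : ∀ x y, d x y = d y x) (w x y z : X) :
    d w x + d y z ≤ max (d w y + d x z) (d w z + d x y) + 2 * δ := by
  have := h w x y z
  unfold gromov at this
  rw [hs x w, hs y w, hs z w] at this
  rcases le_total (d w y + d x z) (d w z + d x y) with h1 | h1
  · rw [max_eq_right h1]
    rw [min_eq_left (by linarith)] at this; linarith
  · rw [max_eq_left h1]
    rw [min_eq_right (by linarith)] at this; linarith


/-! ### Gromov products -/

section Grom
variable {d : G → G → ℝ} {δ : ℝ}

theorem gr_or {X : Type*} {d : X → X → ℝ} {δ : ℝ} (hh : IsHyperbolicWith d δ) (w x y z : X) :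
    gromov d w x y ≤ gromov d w y z + δ ∨ gromov d w x z ≤ gromov d w y z + δ := by
  have := hh w x y z
  rcases min_cases (gromov d w x y) (gromov d w x z) with ⟨h, _⟩ | ⟨h, _⟩
  · left; linarith
  · right; linarith

theorem gr_symm (hd : LIM d) (w x y : G) : gromov d w x y = gromov d w y x := by
  unfold gromov; rw [hd.symm x y]; ring

theorem gr_inv (hd : LIM d) (g w x y : G) :
    gromov d (g * w) (g * x) (g * y) = gromov d w x y := by
  unfold gromov; simp only [hd.inv]

theorem gr_nonneg (hd : LIM d) (w x y : G) : 0 ≤ gromov d w x y := by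
  unfold gromov
  have := hd.triangle x w y
  rw [hd.symm w y] at this
  linarith

theorem gr_le (hd : LIM d) (w x y : G) : gromov d w x y ≤ d w x := by
  unfold gromov
  have := hd.triangle y x w
  rw [hd.symm y x] at this
  rw [hd.symm w x]
  linarith

theorem gr_ge (hd : LIM d) (w x y : G) : d w x - d x y ≤ gromov d w x y := by
  unfold gromov
  have := hd.triangle x y w
  rw [hd.symm w x]
  linarith

theorem gr_lip (hd : LIM d) (w x x' y : G) : gromov d w x y ≤ gromov d w x' y + d x x' := by
  unfold gromov
  have h1 := hd.triangle x x' w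
  have h2 := hd.triangle x' x y
  rw [hd.symm x' x] at h2
  linarith

theorem gr_lip' (hd : LIM d) (w x y y' : G) : gromov d w x y ≤ gromov d w x y' + d y y' := by
  rw [gr_symm hd w x y, gr_symm hd w x y']; exact gr_lip hd w y y' x

theorem gr_base (hd : LIM d) (w w' x y : G) : gromov d w x y ≤ gromov d w' x y + d w w' := by
  unfold gromov
  have h1 := hd.triangle x w' w
  have h2 := hd.triangle y w' w
  rw [hd.symm w' w] at h1 h2
  linarith

theorem d_one_inv (hd : LIM d) (g : G) : d 1 g⁻¹ = d 1 g := by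
  have := hd.inv g 1 g⁻¹
  rw [mul_one, mul_inv_cancel, hd.symm] at this
  exact this.symm

theorem d_eq (hd : LIM d) (x y : G) : d x y = d 1 (x⁻¹ * y) := by
  have := hd.inv x⁻¹ x y
  rw [inv_mul_cancel] at this
  exact this.symm

theorem d_pow_le (hd : LIM d) (a : G) (n : ℕ) : d 1 (a ^ n) ≤ n * d 1 a := by
  induction n with
  | zero => simp [hd.refl]
  | succ n ih =>
    have h1 := hd.triangle 1 (a ^ n) (a ^ (n + 1))
    have h2 := hd.inv (a ^ n) 1 a
    rw [mul_one, ← pow_succ] at h2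
    push_cast
    linarith

/-- powers of `a` form a quasi-ruler -/
structure Ruler (d : G → G → ℝ) (a : G) (C η : ℝ) : Prop where
  gr : ∀ m n : ℕ, gromov d 1 (a ^ m)⁻¹ (a ^ n) ≤ C
  len : ∀ n : ℕ, η * n ≤ d 1 (a ^ n)

theorem Ruler.inv (hd : LIM d) {a : G} {C η : ℝ} (h : Ruler d a C η) : Ruler d a⁻¹ C η where
  gr m n := by
    rw [gr_symm hd, inv_pow, inv_pow, inv_inv]; exact h.gr n m
  len n := by
    rw [inv_pow, d_one_inv hd]; exact h.len n

theorem lox_pow (hd : LIM d) (hh : IsHyperbolicWith d δ) {a : G} {κ η : ℝ} (hη : 0 < η)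
    (hδ : 0 ≤ δ)
    (h1 : gromov d 1 a a⁻¹ ≤ κ) (h2 : 2 * κ + 4 * δ + η ≤ d 1 a) (n : ℕ) :
    gromov d 1 a⁻¹ (a ^ n) ≤ κ + δ ∧ d 1 a - (κ + δ) ≤ gromov d 1 a (a ^ (n + 1)) := by
  have hκ := (gr_nonneg hd 1 a a⁻¹).trans h1
  have step : ∀ n : ℕ, gromov d 1 a⁻¹ (a ^ n) ≤ κ + δ →
      d 1 a - (κ + δ) ≤ gromov d 1 a (a ^ (n + 1)) := by
    intro n hn
    unfold gromov at hn ⊢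
    have e1 : d a⁻¹ (a ^ n) = d 1 (a ^ (n + 1)) := by
      rw [d_eq hd, inv_inv, pow_succ']
    have e2 : d a (a ^ (n + 1)) = d 1 (a ^ n) := by
      rw [d_eq hd, pow_succ', inv_mul_cancel_left]
    rw [e1, hd.symm _ 1, hd.symm _ 1, d_one_inv hd] at hn
    rw [e2, hd.symm _ 1, hd.symm _ 1]
    linarith
  have main : gromov d 1 a⁻¹ (a ^ n) ≤ κ + δ := by
    induction n with
    | zero =>
      have := gr_le hd 1 1 a⁻¹
      rw [gr_symm hd, hd.refl] at this
      rw [pow_zero]; linarith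
    | succ n ih =>
      have hs := step n ih
      rcases gr_or hh 1 (a ^ (n + 1)) a a⁻¹ with h | h
      · rw [gr_symm hd] at h; linarith
      · rw [gr_symm hd] at h; linarith
  exact ⟨main, step n main⟩

theorem lox_ruler (hd : LIM d) (hh : IsHyperbolicWith d δ) {a : G} {κ η : ℝ} (hη : 0 < η)
    (hδ : 0 ≤ δ)
    (h1 : gromov d 1 a a⁻¹ ≤ κ) (h2 : 2 * κ + 4 * δ + η ≤ d 1 a) :
    Ruler d a (κ + 2 * δ) η where
  gr m n := by
    have hκ := (gr_nonneg hd 1 a a⁻¹).trans h1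
    have p1 := (lox_pow hd hh hη hδ h1 h2 n).1
    have h1' : gromov d 1 a⁻¹ a⁻¹⁻¹ ≤ κ := by rw [inv_inv, gr_symm hd]; exact h1
    have h2' : 2 * κ + 4 * δ + η ≤ d 1 a⁻¹ := by rwa [d_one_inv hd]
    cases m with
    | zero =>
      have := gr_le hd 1 1 (a ^ n)
      rw [hd.refl] at this
      simp only [pow_zero, inv_one]; linarith
    | succ m =>
      have p2 := (lox_pow hd hh hη hδ h1' h2' m).2
      rw [d_one_inv hd, inv_pow] at p2
      rcases gr_or hh 1 (a ^ (m + 1))⁻¹ a⁻¹ (a ^ n) with h | h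
      · rw [gr_symm hd] at h; linarith
      · linarith
  len n := by
    have hκ := (gr_nonneg hd 1 a a⁻¹).trans h1
    induction n with
    | zero => simp [hd.refl]
    | succ n ih =>
      have p1 := (lox_pow hd hh hη hδ h1 h2 n).1
      unfold gromov at p1
      have e1 : d a⁻¹ (a ^ n) = d 1 (a ^ (n + 1)) := by
        rw [d_eq hd, inv_inv, pow_succ']
      rw [e1, hd.symm _ 1, hd.symm _ 1, d_one_inv hd] at p1
      push_cast
      linarith

/-- A loxodromic element exists as soon as there are long geodesics. -/
theorem exists_lox (hd : LIM d) (hh : IsHyperbolicWith d δ) (hδ : 1 ≤ δ) {a b : G} {n : ℝ}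
    (hn : 1000 * δ ≤ n) (ha : d 1 a = n) (hb : d 1 b = n) (hab : d a b = 2 * n) :
    ∃ c : G, 2 * gromov d 1 c c⁻¹ + 4 * δ + 1 ≤ d 1 c := by
  by_contra hc
  push Not at hc
  have ca := hc a
  have cb := hc b
  have gab : gromov d 1 a b = 0 := by
    unfold gromov; rw [hd.symm _ 1, hd.symm _ 1, ha, hb, hab]; ring
  rw [ha] at ca
  rw [hb] at cb
  have g1 : gromov d 1 a⁻¹ b ≤ δ := by
    rcases gr_or hh 1 a⁻¹ a b with h | h
    · rw [gr_symm hd] at h; linarith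
    · linarith
  have g2 : gromov d 1 b⁻¹ a ≤ δ := by
    rcases gr_or hh 1 b⁻¹ a b with h | h
    · linarith
    · rw [gr_symm hd] at h; linarith
  have e1 : d a⁻¹ b = d 1 (a * b) := by rw [d_eq hd, inv_inv]
  have lc : 2 * n - 2 * δ ≤ d 1 (a * b) := by
    unfold gromov at g1
    rw [hd.symm _ 1, hd.symm _ 1, d_one_inv hd, ha, hb, e1] at g1
    linarith
  have k1 : n - δ ≤ gromov d 1 (a * b) a := by
    unfold gromov
    have : d (a * b) a = n := by
      rw [hd.symm, d_eq hd, inv_mul_cancel_left, hb]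
    rw [this, hd.symm _ 1, hd.symm _ 1, ha]
    linarith
  have k2 : n - δ ≤ gromov d 1 (a * b)⁻¹ b⁻¹ := by
    unfold gromov
    have : d (a * b)⁻¹ b⁻¹ = n := by
      rw [d_eq hd]; simp [ha]
    rw [this, hd.symm _ 1, hd.symm _ 1, d_one_inv hd, d_one_inv hd, hb]
    linarith
  have k3 : gromov d 1 (a * b)⁻¹ a ≤ 2 * δ := by
    rcases gr_or hh 1 (a * b)⁻¹ b⁻¹ a with h | h
    · linarith
    · linarith
  have k4 : gromov d 1 (a * b) (a * b)⁻¹ ≤ 3 * δ := by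
    rcases gr_or hh 1 (a * b) a (a * b)⁻¹ with h | h
    · rw [gr_symm hd 1 a] at h; linarith
    · rw [gr_symm hd 1 a] at h; linarith
  have := hc (a * b)
  linarith

/-- A point from which the ends of a discrete quasi-ruler are seen in opposite directions is close
to the quasi-ruler. -/
theorem near_ruler (hd : LIM d) (hh : IsHyperbolicWith d δ) (hδ : 0 ≤ δ) {q : ℕ → G} {M : ℕ}
    {σ C2 C3 : ℝ} {g : G} (hσ : ∀ i, d (q i) (q (i + 1)) ≤ σ)
    (hr : ∀ i ≤ M, gromov d (q i) (q 0) (q M) ≤ C2) (hg : gromov d g (q 0) (q M) ≤ C3) :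
    ∃ i ≤ M, d g (q i) ≤ 2 * (C3 + δ + σ) + C2 := by
  classical
  have hσ0 : 0 ≤ σ := (hd.nonneg _ _).trans (hσ 0)
  have hex : ∃ i, gromov d g (q 0) (q i) ≤ C3 + δ ∧ i ≤ M := ⟨M, by linarith, le_rfl⟩
  obtain ⟨h1, h2⟩ := Nat.find_spec hex
  have hmin := fun m (hm : m < Nat.find hex) => Nat.find_min hex hm
  generalize Nat.find hex = i at h1 h2 hmin
  have h3 : gromov d g (q i) (q M) ≤ C3 + δ + σ := by
    rcases i with _ | i
    · linarith
    · have h4 := hmin i (Nat.lt_succ_self i)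
      have h5 : ¬ gromov d g (q 0) (q i) ≤ C3 + δ := fun h => h4 ⟨h, by omega⟩
      have h6 : gromov d g (q i) (q M) ≤ C3 + δ := by
        rcases gr_or hh g (q i) (q 0) (q M) with h | h
        · rw [gr_symm hd] at h; exact absurd (by linarith) h5
        · linarith
      have := gr_lip hd g (q (i + 1)) (q i) (q M)
      rw [hd.symm] at this
      have := hσ i
      linarith
  refine ⟨i, h2, ?_⟩
  have h4 := hr i h2
  unfold gromov at h1 h3 h4 hg
  have t := hd.triangle (q 0) g (q M)
  rw [hd.symm g (q i)]
  rw [hd.symm (q M) (q i)] at h4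
  rw [hd.symm g (q M)] at t
  linarith

end Grom

section Elem
variable {d : G → G → ℝ} {δ : ℝ}

theorem near_of_conj (hd : LIM d) (hh : IsHyperbolicWith d δ) (hδ : 0 ≤ δ) {a b g : G}
    {C η ℓ : ℝ} (hη : 0 < η) (ha : Ruler d a C η) (hb : Ruler d b C η) (hℓ : d 1 b ≤ ℓ)
    {p q : ℕ} (hp : 0 < p) (hc : g * a ^ p = b ^ q * g) :
    ∃ k : ℤ, d g (b ^ k) ≤ 2 * (C + 2 * δ + δ + ℓ) + C := by
  obtain ⟨j, hj⟩ := exists_nat_gt ((d 1 g + C + 2 * δ) / η)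
  rw [div_lt_iff₀ hη] at hj
  have hjc : g * a ^ (p * j) = b ^ (q * j) * g := by
    have h := (show SemiconjBy g (a ^ p) (b ^ q) from hc).pow_right j
    rw [← pow_mul, ← pow_mul] at h
    exact h
  have hjc' : g * (a ^ (p * j))⁻¹ = (b ^ (q * j))⁻¹ * g :=
    (show SemiconjBy g (a ^ (p * j)) (b ^ (q * j)) from hjc).inv_right
  have hlen : d 1 g + C + 2 * δ < d 1 (a ^ (p * j)) := by
    have h := ha.len (p * j)
    have : (j : ℝ) ≤ ((p * j : ℕ) : ℝ) := by exact_mod_cast Nat.le_mul_of_pos_left j hp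
    nlinarith
  have g1 : gromov d g (g * (a ^ (p * j))⁻¹) (g * a ^ (p * j)) ≤ C := by
    have := gr_inv hd g 1 (a ^ (p * j))⁻¹ (a ^ (p * j))
    rw [mul_one] at this
    rw [this]; exact ha.gr _ _
  have dg : ∀ x : G, d (x * g) x = d 1 g := by
    intro x
    have := hd.inv x g 1
    rw [mul_one] at this
    rw [this, hd.symm]
  have g2 : C + 2 * δ < gromov d g (g * (a ^ (p * j))⁻¹) (b ^ (q * j))⁻¹ := by
    have h1 := gr_ge hd g (g * (a ^ (p * j))⁻¹) (b ^ (q * j))⁻¹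
    have h2 := hd.inv g 1 (a ^ (p * j))⁻¹
    rw [mul_one, d_one_inv hd] at h2
    rw [h2, hjc', dg] at h1
    rw [← hjc'] at h1
    linarith
  have g3 : C + 2 * δ < gromov d g (g * a ^ (p * j)) (b ^ (q * j)) := by
    have h1 := gr_ge hd g (g * a ^ (p * j)) (b ^ (q * j))
    have h2 := hd.inv g 1 (a ^ (p * j))
    rw [mul_one] at h2
    rw [h2, hjc, dg] at h1
    rw [← hjc] at h1
    linarith
  have g4 : gromov d g (b ^ (q * j))⁻¹ (b ^ (q * j)) ≤ C + 2 * δ := by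
    rcases gr_or hh g (b ^ (q * j))⁻¹ (g * (a ^ (p * j))⁻¹) (g * a ^ (p * j)) with h | h
    · rw [gr_symm hd] at h; linarith
    · rcases gr_or hh g (b ^ (q * j)) (b ^ (q * j))⁻¹ (g * a ^ (p * j)) with h' | h'
      · rw [gr_symm hd] at h'; linarith
      · rw [gr_symm hd] at h'; linarith
  have key := near_ruler hd hh hδ (q := fun i => (b ^ (q * j))⁻¹ * b ^ i) (M := q * j + q * j)
    (σ := ℓ) (C2 := C) (C3 := C + 2 * δ) (g := g) ?_ ?_ ?_
  · obtain ⟨i, _, hi⟩ := key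
    refine ⟨-(q * j : ℕ) + i, ?_⟩
    rw [zpow_add, zpow_neg, zpow_natCast, zpow_natCast]
    exact hi
  · intro i
    have h2 := hd.inv (b ^ i) 1 b
    rw [mul_one, ← pow_succ] at h2
    simp only [hd.inv, h2]; exact hℓ
  · intro i hi
    have h2 := gr_inv hd (b ^ i) 1 (b ^ i)⁻¹ (b ^ (q * j + q * j - i))
    rw [mul_one, mul_inv_cancel, ← pow_add, Nat.add_sub_cancel' hi] at h2
    simp only [gr_inv hd, pow_zero, h2]
    exact hb.gr _ _
  · simp only [pow_zero, mul_one, pow_add, inv_mul_cancel_left]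
    exact g4

theorem conj_of_fellow (hd : LIM d) (hh : IsHyperbolicWith d δ) (hδ : 0 ≤ δ)
    {α β g : G} {C η ℓ : ℝ} (hη : 0 < η) (ha : Ruler d α C η) (hb : Ruler d β C η)
    (hℓa : d 1 α ≤ ℓ) (hℓ : d 1 β ≤ ℓ)
    (B : Finset G) (hB : ∀ x, d 1 x ≤ 2 * (C + 2 * δ + δ + ℓ) + C → x ∈ B)
    {l0 : ℕ} (hl0 : d 1 g + C + 2 * δ < η * l0) {l k : ℕ}
    (hT : d 1 g + (l0 + B.card) * ℓ + C + 2 * δ < gromov d 1 (g * α ^ l) (β ^ k)) :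
    ∃ p q : ℕ, 0 < p ∧ (g * α ^ p = β ^ q * g ∨ g * α ^ p = β⁻¹ ^ q * g) := by
  have hℓ0 : 0 ≤ ℓ := (hd.nonneg _ _).trans hℓ
  have hC0 : 0 ≤ C := (gr_nonneg hd _ _ _).trans (ha.gr 0 0)
  have dga : ∀ n : ℕ, d 1 (g * α ^ n) ≤ d 1 g + n * ℓ := by
    intro n
    have h1 := hd.triangle 1 g (g * α ^ n)
    have h2 := hd.inv g 1 (α ^ n)
    rw [mul_one] at h2
    have h3 := d_pow_le hd α n
    have h4 : (n : ℝ) * d 1 α ≤ n * ℓ := by gcongr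
    linarith
  have hl : l0 + B.card ≤ l := by
    by_contra hcon
    push Not at hcon
    have h1 := gr_le hd 1 (g * α ^ l) (β ^ k)
    have h2 := dga l
    have h3 : (l : ℝ) ≤ l0 + B.card := by exact_mod_cast hcon.le
    have h4 : (l : ℝ) * ℓ ≤ (l0 + B.card) * ℓ := by gcongr
    linarith
  have key : ∀ t : ℕ, ∃ i : ℕ, t ≤ B.card → (β ^ i)⁻¹ * (g * α ^ (l0 + t)) ∈ B := by
    intro t
    by_cases ht : t ≤ B.card
    swap
    · exact ⟨0, fun h => absurd h ht⟩
    set q := g * α ^ (l0 + t) with hq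
    have g1 : gromov d q g (g * α ^ l) ≤ C := by
      have h2 := gr_inv hd q 1 (α ^ (l0 + t))⁻¹ (α ^ (l - (l0 + t)))
      have e1 : q * (α ^ (l0 + t))⁻¹ = g := by rw [hq]; group
      have e2 : q * α ^ (l - (l0 + t)) = g * α ^ l := by
        rw [hq, mul_assoc, ← pow_add, Nat.add_sub_cancel' (by omega)]
      rw [mul_one, e1, e2] at h2
      rw [h2]; exact ha.gr _ _
    have g2 : C + 2 * δ < gromov d q g 1 := by
      have h1 := gr_ge hd q g 1
      have h2 := hd.inv g (α ^ (l0 + t)) 1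
      rw [mul_one, ← hq, hd.symm _ 1] at h2
      have h3 := ha.len (l0 + t)
      push_cast at h3
      rw [hd.symm g 1] at h1
      have : 0 ≤ η * (t : ℝ) := by positivity
      nlinarith
    have g3 : C + 2 * δ < gromov d q (g * α ^ l) (β ^ k) := by
      have h1 := gr_base hd 1 q (g * α ^ l) (β ^ k)
      have h2 := dga (l0 + t)
      rw [← hq] at h2
      have h4 : ((l0 + t : ℕ) : ℝ) * ℓ ≤ (l0 + B.card) * ℓ := by
        have : (t : ℝ) ≤ B.card := by exact_mod_cast ht
        push_cast
        gcongr
      linarith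
    have g4 : gromov d q 1 (β ^ k) ≤ C + 2 * δ := by
      rcases gr_or hh q 1 g (g * α ^ l) with h | h
      · rw [gr_symm hd] at h; linarith
      · rcases gr_or hh q (β ^ k) 1 (g * α ^ l) with h' | h'
        · rw [gr_symm hd] at h'; linarith
        · rw [gr_symm hd] at h'; linarith
    have key := near_ruler hd hh hδ (q := fun i => β ^ i) (M := k)
      (σ := ℓ) (C2 := C) (C3 := C + 2 * δ) (g := q) ?_ ?_ ?_
    · obtain ⟨i, _, hi⟩ := key
      refine ⟨i, fun _ => hB _ ?_⟩
      rw [← d_eq hd, hd.symm]; exact hi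
    · intro i
      have h2 := hd.inv (β ^ i) 1 β
      rw [mul_one, ← pow_succ] at h2
      simp only [h2]; exact hℓ
    · intro i hi
      have h2 := gr_inv hd (β ^ i) 1 (β ^ i)⁻¹ (β ^ (k - i))
      rw [mul_one, mul_inv_cancel, ← pow_add, Nat.add_sub_cancel' hi] at h2
      simp only [pow_zero, h2]
      exact hb.gr _ _
    · simpa using g4
  choose i hi using key
  obtain ⟨s, hs, t, ht, hst, he⟩ := Finset.exists_ne_map_eq_of_card_lt_of_maps_to
    (s := Finset.range (B.card + 1)) (t := B) (by simp)
    (f := fun t => (β ^ (i t))⁻¹ * (g * α ^ (l0 + t)))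
    (fun t ht => hi t (by simpa [Nat.lt_succ_iff] using ht))
  have main : ∀ s t : ℕ, s < t →
      (β ^ (i s))⁻¹ * (g * α ^ (l0 + s)) = (β ^ (i t))⁻¹ * (g * α ^ (l0 + t)) →
      ∃ p q : ℕ, 0 < p ∧ (g * α ^ p = β ^ q * g ∨ g * α ^ p = β⁻¹ ^ q * g) := by
    intro s t hst he
    have e0 : α ^ (l0 + t) = α ^ (t - s) * α ^ (l0 + s) := by
      rw [← pow_add]; congr 1; omega
    have e1 : g * α ^ (t - s) = β ^ (i t) * (β ^ (i s))⁻¹ * g := by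
      rw [e0] at he
      have : g * (α ^ (t - s) * α ^ (l0 + s)) =
          β ^ (i t) * ((β ^ (i s))⁻¹ * (g * α ^ (l0 + s))) := by rw [he]; group
      apply mul_right_cancel (b := α ^ (l0 + s))
      simpa [mul_assoc] using this
    rcases le_total (i s) (i t) with h | h
    · refine ⟨t - s, i t - i s, by omega, Or.inl ?_⟩
      rw [e1, pow_sub _ h]
    · refine ⟨t - s, i s - i t, by omega, Or.inr ?_⟩
      rw [e1, inv_pow, pow_sub _ h]; group
  rcases lt_or_gt_of_ne hst with h | h
  · exact main s t h he
  · exact main t s h he.symm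

theorem near_or_bounded (hd : LIM d) (hh : IsHyperbolicWith d δ) (hδ : 0 ≤ δ)
    (hfin : ∀ R : ℝ, {g : G | d 1 g ≤ R}.Finite) {a : G} {C η : ℝ} (hη : 0 < η)
    (ha : Ruler d a C η) (g : G) :
    (∃ T : ℝ, ∀ k l : ℤ, gromov d 1 (g * a ^ l) (a ^ k) ≤ T) ∨
      ∃ k : ℤ, d g (a ^ k) ≤ 2 * (C + 2 * δ + δ + d 1 a) + C := by
  classical
  set B := (hfin (2 * (C + 2 * δ + δ + d 1 a) + C)).toFinset with hBdef
  have hB : ∀ x, d 1 x ≤ 2 * (C + 2 * δ + δ + d 1 a) + C → x ∈ B := by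
    intro x hx; simpa [hBdef] using hx
  obtain ⟨l0, hl0⟩ := exists_nat_gt ((d 1 g + C + 2 * δ) / η)
  rw [div_lt_iff₀ hη, mul_comm (l0 : ℝ)] at hl0
  refine or_iff_not_imp_left.2 fun hno => ?_
  push Not at hno
  obtain ⟨k, l, hkl⟩ := hno (d 1 g + (l0 + B.card) * d 1 a + C + 2 * δ)
  have hsign : ∀ n : ℤ, ∃ (b : G) (m : ℕ), (b = a ∨ b = a⁻¹) ∧ a ^ n = b ^ m := by
    intro n
    rcases Int.eq_nat_or_neg n with ⟨m, rfl | rfl⟩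
    · exact ⟨a, m, Or.inl rfl, by simp⟩
    · exact ⟨a⁻¹, m, Or.inr rfl, by simp⟩
  have hR : ∀ b : G, (b = a ∨ b = a⁻¹) → Ruler d b C η ∧ d 1 b ≤ d 1 a ∧
      ∀ k : ℤ, ∃ k' : ℤ, b ^ k = a ^ k' := by
    rintro b (rfl | rfl)
    · exact ⟨ha, le_rfl, fun k => ⟨k, rfl⟩⟩
    · exact ⟨ha.inv hd, (d_one_inv hd a).le, fun k => ⟨-k, by simp⟩⟩
  obtain ⟨α, m, hα, em⟩ := hsign l
  obtain ⟨β, n, hβ, en⟩ := hsign k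
  rw [em, en] at hkl
  obtain ⟨ra, la, _⟩ := hR α hα
  obtain ⟨rb, lb, zb⟩ := hR β hβ
  have hβ' : β⁻¹ = a ∨ β⁻¹ = a⁻¹ := by
    rcases hβ with rfl | rfl
    · exact Or.inr rfl
    · exact Or.inl (inv_inv _)
  obtain ⟨rb', lb', zb'⟩ := hR β⁻¹ hβ'
  obtain ⟨p, q, hp, hc | hc⟩ := conj_of_fellow hd hh hδ hη ra rb la lb B hB hl0 hkl
  · obtain ⟨k, hk⟩ := near_of_conj hd hh hδ hη ra rb lb hp hc
    obtain ⟨k', hk'⟩ := zb k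
    exact ⟨k', hk' ▸ hk⟩
  · obtain ⟨k, hk⟩ := near_of_conj hd hh hδ hη ra rb' lb' hp hc
    obtain ⟨k', hk'⟩ := zb' k
    exact ⟨k', hk' ▸ hk⟩

theorem qi_int (hd : LIM d) {a : G} {C η : ℝ} (hη : 0 < η) (ha : Ruler d a C η) {D : ℝ}
    (hD : ∀ g : G, ∃ k : ℤ, d g (a ^ k) ≤ D) : QuasiIsometric d intDist := by
  choose f hf using hD
  have hD0 : 0 ≤ D := (hd.nonneg _ _).trans (hf 1)
  have zlen : ∀ m n : ℤ, η * |(m : ℝ) - n| ≤ d (a ^ m) (a ^ n) ∧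
      d (a ^ m) (a ^ n) ≤ d 1 a * |(m : ℝ) - n| := by
    intro m n
    have e : d (a ^ m) (a ^ n) = d 1 (a ^ (n - m).natAbs) := by
      rw [d_eq hd, ← zpow_neg, ← zpow_add, ← sub_eq_neg_add]
      rcases Int.natAbs_eq (n - m) with h | h
      · conv_lhs => rw [h]
        rw [zpow_natCast]
      · conv_lhs => rw [h]
        rw [zpow_neg, zpow_natCast, d_one_inv hd]
    have e2 : |(m : ℝ) - n| = ((n - m).natAbs : ℝ) := by
      rw [abs_sub_comm, Nat.cast_natAbs]; push_cast; rfl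
    rw [e, e2]
    exact ⟨ha.len _, by rw [mul_comm]; exact d_pow_le hd a _⟩
  set Λ := max 1 (max (1 / η) (d 1 a)) with hΛ
  have L1 : 1 ≤ Λ := le_max_left _ _
  have L2 : 1 / η ≤ Λ := (le_max_left _ _).trans (le_max_right _ _)
  have L3 : d 1 a ≤ Λ := (le_max_right _ _).trans (le_max_right _ _)
  have up : ∀ x x' : G, η * |(f x : ℝ) - f x'| ≤ d x x' + 2 * D := by
    intro x x'
    have h1 := (zlen (f x) (f x')).1
    have h2 := hd.triangle (a ^ f x) x (a ^ f x')
    have h3 := hd.triangle x x' (a ^ f x')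
    have h4 := hf x
    have h5 := hf x'
    rw [hd.symm] at h4
    linarith
  have inv_mul_le : ∀ u v : ℝ, 0 ≤ v → η * u ≤ v → u ≤ Λ * v := by
    intro u v hv h
    have : u ≤ 1 / η * v := by
      rw [div_mul_eq_mul_div, one_mul, le_div_iff₀ hη]; linarith
    exact this.trans (by gcongr)
  refine ⟨f, Λ, Λ * (2 * D), Λ * D, L1, by positivity, by positivity, ?_, ?_⟩
  · intro x x'
    constructor
    · have h1 := (zlen (f x) (f x')).2
      have h2 := hd.triangle x (a ^ f x) x'
      have h3 := hd.triangle (a ^ f x) (a ^ f x') x'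
      have h4 := hf x
      have h5 := hf x'
      rw [hd.symm x' _] at h5
      unfold intDist
      have h6 : d 1 a * |(f x : ℝ) - f x'| ≤ Λ * |(f x : ℝ) - f x'| := by gcongr
      rw [sub_le_iff_le_add, div_le_iff₀ (by linarith)]
      have h7 : 2 * D ≤ Λ * (2 * D) * Λ := by nlinarith [mul_nonneg hD0 (by linarith : 0 ≤ Λ)]
      nlinarith
    · unfold intDist
      have := inv_mul_le _ _ (by linarith [hd.nonneg x x']) (up x x')
      linarith
  · intro k
    refine ⟨a ^ k, ?_⟩
    have h1 := (zlen k (f (a ^ k))).1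
    have h2 := hf (a ^ k)
    unfold intDist
    rw [abs_sub_comm]
    exact inv_mul_le _ _ hD0 (h1.trans h2)

/-- Ping-pong data. -/
structure PingPong (a b : G) where
  A1 : Set G
  A2 : Set G
  B1 : Set G
  B2 : Set G
  ha : ∀ g, g ∉ A1 → a⁻¹ * g ∈ A2
  hb : ∀ g, g ∉ B1 → b⁻¹ * g ∈ B2
  disj : ∀ g, (g ∈ A1 → g ∉ A2 ∧ g ∉ B1 ∧ g ∉ B2) ∧ (g ∈ A2 → g ∉ B1 ∧ g ∉ B2) ∧
    (g ∈ B1 → g ∉ B2)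

theorem pingpong_of_gr (hd : LIM d) (hh : IsHyperbolicWith d δ) {a b : G} {K : ℝ}
    (h1 : gromov d 1 a a⁻¹ ≤ K) (h2 : gromov d 1 b b⁻¹ ≤ K) (h3 : gromov d 1 a b ≤ K)
    (h4 : gromov d 1 a b⁻¹ ≤ K) (h5 : gromov d 1 a⁻¹ b ≤ K) (h6 : gromov d 1 a⁻¹ b⁻¹ ≤ K)
    (ha : 2 * (K + δ) < d 1 a) (hb : 2 * (K + δ) < d 1 b) : Nonempty (PingPong a b) := by
  have flip : ∀ c g : G, ¬ d 1 c / 2 ≤ gromov d 1 g c → d 1 c / 2 ≤ gromov d 1 (c⁻¹ * g) c⁻¹ := by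
    intro c g h
    have e := gr_inv hd c⁻¹ c g 1
    rw [inv_mul_cancel, mul_one] at e
    rw [e]
    unfold gromov at h ⊢
    rw [hd.symm c 1] at h
    linarith
  have sep : ∀ {x y g : G} {s t : ℝ}, gromov d 1 x y ≤ K → K + δ < s → K + δ < t →
      s ≤ gromov d 1 g x → ¬ t ≤ gromov d 1 g y := by
    intro x y g s t h hs ht h1 h2
    rcases gr_or hh 1 g x y with h' | h' <;> linarith
  have ha' : K + δ < d 1 a / 2 := by linarith
  have hb' : K + δ < d 1 b / 2 := by linarith
  exact ⟨{
    A1 := {g | d 1 a / 2 ≤ gromov d 1 g a}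
    A2 := {g | d 1 a / 2 ≤ gromov d 1 g a⁻¹}
    B1 := {g | d 1 b / 2 ≤ gromov d 1 g b}
    B2 := {g | d 1 b / 2 ≤ gromov d 1 g b⁻¹}
    ha := fun g hg => flip a g hg
    hb := fun g hg => flip b g hg
    disj := fun g => ⟨fun h => ⟨sep h1 ha' ha' h, sep h3 ha' hb' h, sep h4 ha' hb' h⟩,
      fun h => ⟨sep h5 ha' hb' h, sep h6 ha' hb' h⟩, fun h => sep h2 hb' hb' h⟩ }⟩

theorem exists_pingpong (hG : NonElemHyperbolic G) : ∃ a b : G, Nonempty (PingPong a b) := by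
  obtain ⟨hinf, ⟨S, hS⟩, hall⟩ := hG
  obtain ⟨⟨δ0, hδ0, hh0⟩, hnq⟩ := hall S hS
  have hd := wordDist_LIM hS
  set d := wordDist S with hddef
  set δ := δ0 + 1 with hδdef
  have hδ : 1 ≤ δ := by linarith
  have hh : IsHyperbolicWith d δ := fun w x y z => by
    have := hh0 w x y z; linarith
  have hfin : ∀ R : ℝ, {g : G | d 1 g ≤ R}.Finite := by
    intro R
    refine (wl_ball_finite hS ⌈R⌉₊).subset ?_
    intro g hg
    have : (wordLength S g : ℝ) ≤ R := by simpa [hddef, wordDist] using hg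
    exact_mod_cast this.trans (Nat.le_ceil R)
  -- a loxodromic element
  obtain ⟨a, ha⟩ : ∃ c : G, 2 * gromov d 1 c c⁻¹ + 4 * δ + 1 ≤ d 1 c := by
    obtain ⟨n, hn⟩ := exists_nat_ge (1000 * δ)
    obtain ⟨g, hg⟩ := wl_surj hS (2 * n)
    obtain ⟨p, p0, p1, hp⟩ := wl_geod hS g
    rw [hg] at p1 hp
    have q1 := hp 0 n (by omega) (by omega)
    have q2 := hp n (2 * n) (by omega) (by omega)
    refine exists_lox hd hh hδ (a := (p n)⁻¹) (b := (p n)⁻¹ * p (2 * n)) (n := n) hn ?_ ?_ ?_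
    · rw [d_one_inv hd]
      simp only [hddef, wordDist]
      rw [p0, inv_one, one_mul] at q1
      simp [q1]
    · simp only [hddef, wordDist]
      rw [inv_one, one_mul, q2]; congr 1; omega
    · simp only [hddef, wordDist]
      rw [inv_inv, mul_inv_cancel_left, p1, hg]; push_cast; rfl
  have hr : Ruler d a (gromov d 1 a a⁻¹ + 2 * δ) 1 :=
    lox_ruler hd hh one_pos (by linarith) le_rfl ha
  set C := gromov d 1 a a⁻¹ + 2 * δ with hC
  have hC0 : 0 ≤ C := by have := gr_nonneg hd 1 a a⁻¹; linarith
  obtain ⟨g, T, hT⟩ : ∃ g : G, ∃ T : ℝ, ∀ k l : ℤ, gromov d 1 (g * a ^ l) (a ^ k) ≤ T := by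
    by_contra hcon
    push Not at hcon
    refine hnq (qi_int hd one_pos hr (D := 2 * (C + 2 * δ + δ + d 1 a) + C) ?_)
    intro g
    rcases near_or_bounded hd hh (by linarith) hfin one_pos hr g with ⟨T, hT⟩ | h
    · obtain ⟨k, l, hkl⟩ := hcon g T
      exact absurd (hT k l) (not_le.2 hkl)
    · exact h
  have hg0 := hd.nonneg 1 g
  have hT0 : 0 ≤ T := (gr_nonneg hd _ _ _).trans (hT 0 0)
  obtain ⟨N, hN⟩ := exists_nat_gt (2 * (T + C + 3 * d 1 g + δ) + 2 * d 1 g)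
  have hlen := hr.len N
  have hT' : ∀ x y : G, (x = a ^ N ∨ x = (a ^ N)⁻¹) → (y = a ^ N ∨ y = (a ^ N)⁻¹) →
      gromov d 1 x (g * y * g⁻¹) ≤ T + C + 3 * d 1 g := by
    intro x y hx hy
    have h1 : gromov d 1 (g * y) x ≤ T := by
      have ex : ∃ k : ℤ, x = a ^ k := by
        rcases hx with rfl | rfl
        · exact ⟨N, by simp⟩
        · exact ⟨-N, by simp⟩
      have ey : ∃ k : ℤ, y = a ^ k := by
        rcases hy with rfl | rfl
        · exact ⟨N, by simp⟩
        · exact ⟨-N, by simp⟩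
      obtain ⟨k, rfl⟩ := ex
      obtain ⟨l, rfl⟩ := ey
      exact hT k l
    have h2 := gr_lip hd 1 (g * y * g⁻¹) (g * y) x
    have h3 := hd.inv (g * y) g⁻¹ 1
    rw [mul_one, hd.symm g⁻¹, d_one_inv hd] at h3
    rw [gr_symm hd]
    linarith
  have binv : (g * a ^ N * g⁻¹)⁻¹ = g * (a ^ N)⁻¹ * g⁻¹ := by group
  refine ⟨a ^ N, g * a ^ N * g⁻¹, pingpong_of_gr hd hh (K := T + C + 3 * d 1 g) ?_ ?_ ?_ ?_ ?_ ?_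
    ?_ ?_⟩
  · have := hr.gr N N
    rw [gr_symm hd] at this
    linarith
  · rw [binv]
    have h1 := gr_lip hd 1 (g * a ^ N * g⁻¹) (g * a ^ N) (g * (a ^ N)⁻¹ * g⁻¹)
    have h2 := gr_lip' hd 1 (g * a ^ N) (g * (a ^ N)⁻¹ * g⁻¹) (g * (a ^ N)⁻¹)
    have h3 := hd.inv (g * a ^ N) g⁻¹ 1
    have h4 := hd.inv (g * (a ^ N)⁻¹) g⁻¹ 1
    rw [mul_one, hd.symm g⁻¹, d_one_inv hd] at h3 h4
    have h5 := gr_base hd 1 g (g * a ^ N) (g * (a ^ N)⁻¹)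
    have h6 := gr_inv hd g 1 (a ^ N) (a ^ N)⁻¹
    rw [mul_one] at h6
    have h7 := hr.gr N N
    rw [gr_symm hd] at h7
    linarith
  · exact hT' _ _ (Or.inl rfl) (Or.inl rfl)
  · rw [binv]; exact hT' _ _ (Or.inl rfl) (Or.inr rfl)
  · exact hT' _ _ (Or.inr rfl) (Or.inl rfl)
  · rw [binv]; exact hT' _ _ (Or.inr rfl) (Or.inr rfl)
  · linarith
  · have h1 := hd.inv g 1 (a ^ N)
    rw [mul_one] at h1
    have h2 := hd.triangle g 1 (g * a ^ N)
    have h3 := hd.triangle 1 (g * a ^ N * g⁻¹) (g * a ^ N)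
    have h4 := hd.inv (g * a ^ N) g⁻¹ 1
    rw [mul_one, hd.symm g⁻¹, d_one_inv hd] at h4
    rw [hd.symm g 1] at h2
    linarith

end Elem

/-! ### Spectral gap -/

section Gap

/-- squared `ℓ²` norm -/
def qn (f : G → ℝ) : ℝ≥0∞ := ∑' g, ENNReal.ofReal (f g ^ 2)

/-- displacement of `f` under left translation by `h` -/
def disp (h : G) (f : G → ℝ) : ℝ≥0∞ := ∑' g, ENNReal.ofReal ((f (h⁻¹ * g) - f g) ^ 2)

/-- Dirichlet form -/
def dform (m : G → ℝ≥0∞) (f : G → ℝ) : ℝ≥0∞ := ∑' h, m h * disp h f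

/-- `⟨Pf, f⟩` -/
def bform (m : G → ℝ≥0∞) (f : G → ℝ) : ℝ≥0∞ :=
  ∑' h, m h * ∑' g, ENNReal.ofReal (f (h⁻¹ * g) * f g)

theorem tsum_shift (h : G) (F : G → ℝ≥0∞) : ∑' g, F (h * g) = ∑' g, F g :=
  (Equiv.mulLeft h).tsum_eq F

theorem bform_add_dform {m : G → ℝ≥0∞} (hm : ∑' h, m h = 1) {f : G → ℝ} (hf : ∀ g, 0 ≤ f g) :
    2 * bform m f + dform m f = 2 * qn f := by
  have key : ∀ h : G, 2 * (∑' g, ENNReal.ofReal (f (h⁻¹ * g) * f g)) + disp h f = 2 * qn f := by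
    intro h
    have e : ∑' g, ENNReal.ofReal (f (h⁻¹ * g) ^ 2) = qn f :=
      tsum_shift h⁻¹ (fun g => ENNReal.ofReal (f g ^ 2))
    rw [two_mul (qn f)]
    nth_rewrite 1 [← e]
    unfold disp qn
    rw [← ENNReal.tsum_mul_left, ← ENNReal.tsum_add, ← ENNReal.tsum_add]
    congr 1
    ext1 g
    have : (2 : ℝ≥0∞) = ENNReal.ofReal 2 := by simp
    rw [this, ← ENNReal.ofReal_mul (by norm_num), ← ENNReal.ofReal_add, ← ENNReal.ofReal_add]
    · congr 1; ring
    · positivity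
    · positivity
    · have := hf g; have := hf (h⁻¹ * g); positivity
    · positivity
  unfold bform dform
  rw [← ENNReal.tsum_mul_left, ← ENNReal.tsum_add]
  calc ∑' h, (2 * (m h * ∑' g, ENNReal.ofReal (f (h⁻¹ * g) * f g)) + m h * disp h f)
      = ∑' h, m h * (2 * qn f) := by
        congr 1; ext1 h; rw [← key h]; ring
    _ = 2 * qn f := by rw [ENNReal.tsum_mul_right, hm, one_mul]

theorem disp_le {m : G → ℝ≥0∞} (hm : ∀ h, m h ≠ ∞)
    (hgen : Subgroup.closure {g : G | m g ≠ 0} = ⊤) (h : G) :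
    ∃ C : ℝ≥0∞, C ≠ ∞ ∧ ∀ f : G → ℝ, disp h f ≤ C * dform m f := by
  have hh : h ∈ Subgroup.closure {g : G | m g ≠ 0} := by rw [hgen]; trivial
  induction hh using Subgroup.closure_induction with
  | mem x hx =>
    refine ⟨(m x)⁻¹, by simpa using hx, fun f => ?_⟩
    have h1 : m x * disp x f ≤ dform m f := ENNReal.le_tsum (f := fun h => m h * disp h f) x
    calc disp x f = (m x)⁻¹ * (m x * disp x f) := by
          rw [← mul_assoc, ENNReal.inv_mul_cancel hx (hm x), one_mul]
      _ ≤ _ := by gcongr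
  | one => exact ⟨0, by simp, fun f => by simp [disp]⟩
  | mul x y _ _ ihx ihy =>
    obtain ⟨C, hC, hx⟩ := ihx
    obtain ⟨D, hD, hy⟩ := ihy
    refine ⟨2 * D + 2 * C, by finiteness, fun f => ?_⟩
    have h1 : disp (x * y) f ≤ 2 * disp y f + 2 * disp x f := by
      have e : disp y f = ∑' g, ENNReal.ofReal ((f (y⁻¹ * (x⁻¹ * g)) - f (x⁻¹ * g)) ^ 2) :=
        (tsum_shift x⁻¹ (fun g => ENNReal.ofReal ((f (y⁻¹ * g) - f g) ^ 2))).symm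
      rw [e]
      unfold disp
      rw [← ENNReal.tsum_mul_left, ← ENNReal.tsum_mul_left, ← ENNReal.tsum_add]
      refine ENNReal.tsum_le_tsum fun g => ?_
      have : (2 : ℝ≥0∞) = ENNReal.ofReal 2 := by simp
      rw [this, ← ENNReal.ofReal_mul (by norm_num), ← ENNReal.ofReal_mul (by norm_num),
        ← ENNReal.ofReal_add (by positivity) (by positivity)]
      apply ENNReal.ofReal_le_ofReal
      rw [mul_inv_rev, mul_assoc]
      nlinarith [sq_nonneg ((f (y⁻¹ * (x⁻¹ * g)) - f (x⁻¹ * g)) - (f (x⁻¹ * g) - f g))]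
    calc disp (x * y) f ≤ 2 * disp y f + 2 * disp x f := h1
      _ ≤ 2 * (D * dform m f) + 2 * (C * dform m f) := by gcongr; exacts [hy f, hx f]
      _ = _ := by ring
  | inv x _ ih =>
    obtain ⟨C, hC, hx⟩ := ih
    refine ⟨C, hC, fun f => le_trans (le_of_eq ?_) (hx f)⟩
    unfold disp
    rw [← tsum_shift x⁻¹]
    congr 1
    ext1 g
    rw [inv_inv, mul_inv_cancel_left]
    congr 1
    ring

theorem half_pp {a : G} {A1 A2 : Set G} (ha : ∀ g, g ∉ A1 → a⁻¹ * g ∈ A2)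
    (hdisj : ∀ g, g ∈ A1 → g ∉ A2) (f : G → ℝ) :
    2 * qn f ≤ 3 * ∑' g, (A1 ∪ A2).indicator (fun g => ENNReal.ofReal (f g ^ 2)) g
      + 6 * disp a f := by
  classical
  set ψ : G → G := fun g => if g ∈ A1 then g else a⁻¹ * g with hψ
  have hmem : ∀ g, ψ g ∈ A1 ∪ A2 := by
    intro g
    by_cases h : g ∈ A1
    · simp [hψ, h]
    · simp only [hψ, h, if_false]; exact Or.inr (ha g h)
  have hinj : Function.Injective ψ := by
    intro x y hxy
    by_cases hx : x ∈ A1 <;> by_cases hy : y ∈ A1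
    · simpa [hψ, hx, hy] using hxy
    · simp only [hψ, hx, hy, if_true, if_false] at hxy
      exact absurd (ha y hy) (hxy ▸ hdisj x hx)
    · simp only [hψ, hx, hy, if_true, if_false] at hxy
      exact absurd (ha x hx) (hxy ▸ hdisj y hy)
    · simpa [hψ, hx, hy] using hxy
  have h1 := ENNReal.tsum_comp_le_tsum_of_injective hinj
    ((A1 ∪ A2).indicator (fun g => ENNReal.ofReal (f g ^ 2)))
  have h2 : 2 * qn f ≤ 3 * ∑' g, ENNReal.ofReal (f (ψ g) ^ 2) + 6 * disp a f := by
    unfold qn disp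
    rw [← ENNReal.tsum_mul_left, ← ENNReal.tsum_mul_left, ← ENNReal.tsum_mul_left,
      ← ENNReal.tsum_add]
    refine ENNReal.tsum_le_tsum fun g => ?_
    have e2 : (2 : ℝ≥0∞) = ENNReal.ofReal 2 := by simp
    have e3 : (3 : ℝ≥0∞) = ENNReal.ofReal 3 := by simp
    have e6 : (6 : ℝ≥0∞) = ENNReal.ofReal 6 := by simp
    rw [e2, e3, e6, ← ENNReal.ofReal_mul (by norm_num), ← ENNReal.ofReal_mul (by norm_num),
      ← ENNReal.ofReal_mul (by norm_num), ← ENNReal.ofReal_add (by positivity) (by positivity)]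
    apply ENNReal.ofReal_le_ofReal
    by_cases h : g ∈ A1
    · simp only [hψ, h, if_true]; nlinarith [sq_nonneg (f g), sq_nonneg (f (a⁻¹ * g) - f g)]
    · simp only [hψ, h, if_false]
      nlinarith [sq_nonneg (f (a⁻¹ * g) + 2 * (f (a⁻¹ * g) - f g))]
  have h3 : ∑' g, ENNReal.ofReal (f (ψ g) ^ 2) ≤
      ∑' g, (A1 ∪ A2).indicator (fun g => ENNReal.ofReal (f g ^ 2)) g := by
    refine le_trans (le_of_eq ?_) h1
    congr 1
    ext1 g
    rw [Set.indicator_of_mem (hmem g)]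
  exact h2.trans (add_le_add (mul_le_mul' le_rfl h3) le_rfl)

theorem qn_le_disp {a b : G} (P : PingPong a b) {f : G → ℝ} (hf : qn f ≠ ∞) :
    qn f ≤ 6 * (disp a f + disp b f) := by
  have h1 := half_pp P.ha (fun g hg => ((P.disj g).1 hg).1) f
  have h2 := half_pp P.hb (fun g hg => ((P.disj g).2.2 hg)) f
  set F : G → ℝ≥0∞ := fun g => ENNReal.ofReal (f g ^ 2) with hF
  have h3 : ∑' g, (P.A1 ∪ P.A2).indicator F g + ∑' g, (P.B1 ∪ P.B2).indicator F g ≤ qn f := by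
    rw [← ENNReal.tsum_add]
    refine ENNReal.tsum_le_tsum fun g => ?_
    obtain ⟨d1, d2, d3⟩ := P.disj g
    by_cases hA : g ∈ P.A1 ∪ P.A2
    · have hB : g ∉ P.B1 ∪ P.B2 := by
        rintro (hB | hB) <;> rcases hA with hA | hA
        · exact (d1 hA).2.1 hB
        · exact (d2 hA).1 hB
        · exact (d1 hA).2.2 hB
        · exact (d2 hA).2 hB
      simp [hA, hB, hF]
    · simp only [Set.indicator_of_notMem hA, zero_add]
      exact Set.indicator_le_self _ _ _
  have h4 : qn f + 3 * qn f ≤ 6 * (disp a f + disp b f) + 3 * qn f := by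
    calc qn f + 3 * qn f = 2 * qn f + 2 * qn f := by ring
      _ ≤ _ := add_le_add h1 h2
      _ = 6 * (disp a f + disp b f) + 3 * (∑' g, (P.A1 ∪ P.A2).indicator F g +
          ∑' g, (P.B1 ∪ P.B2).indicator F g) := by ring
      _ ≤ _ := by gcongr
  exact (ENNReal.add_le_add_iff_right (by finiteness)).1 h4

/-- spectral gap -/
theorem spectral_gap (hG : NonElemHyperbolic G) {m : G → ℝ≥0∞} (hm : ∑' h, m h = 1)
    (hgen : Subgroup.closure {g : G | m g ≠ 0} = ⊤) :
    ∃ κ : ℝ, 0 < κ ∧ κ ≤ 1 ∧ ∀ f : G → ℝ, (∀ g, 0 ≤ f g) → qn f ≠ ∞ →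
      bform m f ≤ ENNReal.ofReal ((1 - κ) * (qn f).toReal) := by
  obtain ⟨a, b, ⟨P⟩⟩ := exists_pingpong hG
  have hm' : ∀ h, m h ≠ ∞ := fun h =>
    ((ENNReal.le_tsum h).trans hm.le).trans_lt ENNReal.one_lt_top |>.ne
  obtain ⟨Ca, hCa, ha⟩ := disp_le hm' hgen a
  obtain ⟨Cb, hCb, hb⟩ := disp_le hm' hgen b
  set K := (6 * (Ca + Cb)).toReal with hK
  have hK0 : 0 ≤ K := ENNReal.toReal_nonneg
  refine ⟨1 / (2 * (K + 1)), by positivity, ?_, ?_⟩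
  · rw [div_le_one (by positivity)]; linarith
  intro f hf hq
  have h1 : qn f ≤ 6 * (Ca + Cb) * dform m f := by
    calc qn f ≤ 6 * (disp a f + disp b f) := qn_le_disp P hq
      _ ≤ 6 * (Ca * dform m f + Cb * dform m f) := by gcongr; exacts [ha f, hb f]
      _ = _ := by ring
  have h2 := bform_add_dform hm hf
  have hfin : 2 * bform m f + dform m f ≠ ∞ := by rw [h2]; finiteness
  have hB : bform m f ≠ ∞ := by
    intro h; rw [h] at hfin; simp at hfin
  have hD : dform m f ≠ ∞ := by
    intro h; rw [h] at hfin; simp at hfin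
  have r1 : (qn f).toReal ≤ K * (dform m f).toReal := by
    have := ENNReal.toReal_mono (by finiteness) h1
    rwa [ENNReal.toReal_mul, ← hK] at this
  have r2 : 2 * (bform m f).toReal + (dform m f).toReal = 2 * (qn f).toReal := by
    have := congrArg ENNReal.toReal h2
    rwa [ENNReal.toReal_add (by finiteness) hD, ENNReal.toReal_mul, ENNReal.toReal_mul] at this
  rw [← ENNReal.ofReal_toReal hB]
  apply ENNReal.ofReal_le_ofReal
  have r3 : (qn f).toReal ≤ (K + 1) * (dform m f).toReal := by
    have : 0 ≤ (dform m f).toReal := ENNReal.toReal_nonneg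
    linarith
  have r4 : (qn f).toReal / (2 * (K + 1)) ≤ (dform m f).toReal / 2 := by
    rw [div_le_div_iff₀ (by positivity) (by norm_num)]; nlinarith
  have : (1 - 1 / (2 * (K + 1))) * (qn f).toReal = (qn f).toReal - (qn f).toReal / (2 * (K + 1)) := by
    ring
  rw [this]
  linarith

end Gap

/-! ### Random walk -/

section Walk

open scoped Classical in
/-- convolution powers in `ℝ≥0∞` -/
def cn (m : G → ℝ≥0∞) : ℕ → G → ℝ≥0∞
  | 0 => fun g => if g = 1 then 1 else 0
  | n + 1 => fun g => ∑' h : G, m h * cn m n (h⁻¹ * g)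

/-- Green function -/
def uu (m : G → ℝ≥0∞) (g : G) : ℝ≥0∞ := ∑' n, cn m n g

open scoped Classical in
/-- first hitting probabilities -/
def fk (m : G → ℝ≥0∞) (y : G) : ℕ → G → ℝ≥0∞
  | 0 => fun x => if x = y then 1 else 0
  | n + 1 => fun x => if x = y then 0 else ∑' h : G, m h * fk m y n (x * h)

theorem cn_succ (m : G → ℝ≥0∞) (n : ℕ) (g : G) :
    cn m (n + 1) g = ∑' h : G, m h * cn m n (h⁻¹ * g) := rfl

theorem cn_zero_one (m : G → ℝ≥0∞) : cn m 0 (1 : G) = 1 := by simp [cn]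

theorem cn_zero_ne (m : G → ℝ≥0∞) {g : G} (h : g ≠ 1) : cn m 0 g = 0 := by simp [cn, h]

theorem cn_one (m : G → ℝ≥0∞) (g : G) : cn m 1 g = m g := by
  rw [cn_succ, tsum_eq_single g]
  · simp [cn_zero_one]
  · intro h hh
    rw [cn_zero_ne, mul_zero]
    intro h2
    exact hh (inv_mul_eq_one.1 h2)

theorem cn_succ' (m : G → ℝ≥0∞) (n : ℕ) (g : G) :
    cn m (n + 1) g = ∑' h : G, m h * cn m n (g * h⁻¹) := by
  induction n generalizing g with
  | zero =>
    rw [zero_add, cn_one, tsum_eq_single g]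
    · simp [cn_zero_one]
    · intro h hh
      rw [cn_zero_ne, mul_zero]
      intro h2
      exact hh (mul_inv_eq_one.1 h2).symm
  | succ n ih =>
    calc cn m (n + 1 + 1) g = ∑' k, ∑' h, m k * (m h * cn m n (k⁻¹ * g * h⁻¹)) := by
          rw [cn_succ]; congr 1; ext1 k; rw [ih, ENNReal.tsum_mul_left]
      _ = ∑' h, ∑' k, m k * (m h * cn m n (k⁻¹ * g * h⁻¹)) := ENNReal.tsum_comm
      _ = _ := by
          congr 1; ext1 h
          rw [cn_succ, ← ENNReal.tsum_mul_left]
          congr 1; ext1 k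
          rw [mul_assoc k⁻¹]; ring

theorem cn_inv {m : G → ℝ≥0∞} (hs : ∀ g, m g⁻¹ = m g) (n : ℕ) (g : G) :
    cn m n g⁻¹ = cn m n g := by
  induction n generalizing g with
  | zero =>
    by_cases h : g = 1
    · rw [h, inv_one]
    · rw [cn_zero_ne m h, cn_zero_ne m (by simpa using h)]
  | succ n ih =>
    rw [cn_succ, cn_succ', ← (Equiv.inv G).tsum_eq]
    congr 1; ext1 h
    simp only [Equiv.inv_apply, inv_inv]
    rw [hs, ← ih (g * h⁻¹)]
    simp

theorem uu_inv {m : G → ℝ≥0∞} (hs : ∀ g, m g⁻¹ = m g) (g : G) : uu m g⁻¹ = uu m g := by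
  unfold uu; simp_rw [cn_inv hs]

theorem uu_rec (m : G → ℝ≥0∞) (g : G) :
    uu m g = cn m 0 g + ∑' h, m h * uu m (h⁻¹ * g) := by
  unfold uu
  rw [tsum_eq_zero_add' ENNReal.summable]
  congr 1
  simp_rw [cn_succ, ← ENNReal.tsum_mul_left]
  rw [ENNReal.tsum_comm]

theorem cn_moment {m : G → ℝ≥0∞} (w : G → ℝ≥0∞) (w1 : w 1 ≤ 1)
    (hw : ∀ g h, w (g * h) ≤ w g * w h) (n : ℕ) :
    ∑' g, cn m n g * w g ≤ (∑' g, m g * w g) ^ n := by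
  induction n with
  | zero =>
    rw [tsum_eq_single 1]
    · simpa [cn_zero_one] using w1
    · intro b hb; rw [cn_zero_ne m hb, zero_mul]
  | succ n ih =>
    calc ∑' g, cn m (n + 1) g * w g = ∑' g, ∑' h, m h * cn m n (h⁻¹ * g) * w g := by
          simp_rw [cn_succ, ENNReal.tsum_mul_right]
      _ = ∑' h, ∑' g, m h * cn m n (h⁻¹ * g) * w g := ENNReal.tsum_comm
      _ ≤ ∑' h, ∑' g, (m h * w h) * (cn m n (h⁻¹ * g) * w (h⁻¹ * g)) := by
          refine ENNReal.tsum_le_tsum fun h => ENNReal.tsum_le_tsum fun g => ?_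
          calc m h * cn m n (h⁻¹ * g) * w g = m h * cn m n (h⁻¹ * g) * w (h * (h⁻¹ * g)) := by
                rw [mul_inv_cancel_left]
            _ ≤ m h * cn m n (h⁻¹ * g) * (w h * w (h⁻¹ * g)) := by gcongr; exact hw _ _
            _ = _ := by ring
      _ = ∑' h, (m h * w h) * ∑' g, cn m n g * w g := by
          congr 1; ext1 h
          rw [ENNReal.tsum_mul_left, tsum_shift h⁻¹ (fun g => cn m n g * w g)]
      _ = (∑' h, m h * w h) * ∑' g, cn m n g * w g := by rw [ENNReal.tsum_mul_right]
      _ ≤ (∑' h, m h * w h) * (∑' h, m h * w h) ^ n := by gcongr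
      _ = _ := by ring

theorem cn_le_moment {m : G → ℝ≥0∞} (w : G → ℝ≥0∞) (w1 : w 1 ≤ 1)
    (hw : ∀ g h, w (g * h) ≤ w g * w h) (n : ℕ) (g : G) :
    cn m n g * w g ≤ (∑' g, m g * w g) ^ n :=
  (ENNReal.le_tsum (f := fun g => cn m n g * w g) g).trans (cn_moment w w1 hw n)

theorem cn_sum {m : G → ℝ≥0∞} (hm : ∑' h, m h = 1) (n : ℕ) : ∑' g, cn m n g ≤ 1 := by
  simpa [hm] using cn_moment (m := m) (fun _ => 1) le_rfl (fun _ _ => by simp) n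

theorem cn_le_one {m : G → ℝ≥0∞} (hm : ∑' h, m h = 1) (n : ℕ) (g : G) : cn m n g ≤ 1 :=
  (ENNReal.le_tsum g).trans (cn_sum hm n)

/-- truncated weighted Green function -/
def VN (m : G → ℝ≥0∞) (s : ℝ≥0∞) (N : ℕ) (g : G) : ℝ≥0∞ :=
  ∑ n ∈ Finset.range N, s ^ n * cn m n g

theorem VN_le (m : G → ℝ≥0∞) (s : ℝ≥0∞) (N : ℕ) (g : G) :
    VN m s N g ≤ cn m 0 g + s * ∑' h, m h * VN m s N (h⁻¹ * g) := by
  have h1 : VN m s N g ≤ VN m s (N + 1) g := by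
    unfold VN; rw [Finset.sum_range_succ]; exact le_self_add
  refine h1.trans (le_of_eq ?_)
  unfold VN
  rw [Finset.sum_range_succ', pow_zero, one_mul, add_comm]
  congr 1
  simp_rw [Finset.mul_sum, cn_succ]
  rw [Summable.tsum_finsetSum (fun _ _ => ENNReal.summable), Finset.mul_sum]
  refine Finset.sum_congr rfl fun n _ => ?_
  rw [← ENNReal.tsum_mul_left, ← ENNReal.tsum_mul_left]
  congr 1; ext1 h; ring

theorem VN_bound (hG : NonElemHyperbolic G) {m : G → ℝ≥0∞} (hm : ∑' h, m h = 1)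
    (hgen : Subgroup.closure {g : G | m g ≠ 0} = ⊤) :
    ∃ s B : ℝ, 1 < s ∧ 1 ≤ B ∧ ∀ N g, VN m (ENNReal.ofReal s) N g ≤ ENNReal.ofReal B := by
  obtain ⟨κ, hκ, hκ1, H⟩ := spectral_gap hG hm hgen
  have hB1 : 1 ≤ 2 / κ := by rw [le_div_iff₀ hκ]; linarith
  refine ⟨1 + κ / 2, 2 / κ, by linarith, hB1, ?_⟩
  intro N
  set s : ℝ := 1 + κ / 2 with hs
  set S := ENNReal.ofReal s with hS
  set V := VN m S N with hV
  set A : ℝ≥0∞ := ∑ n ∈ Finset.range N, S ^ n with hA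
  have hAf : A ≠ ∞ := by
    rw [hA]; exact ENNReal.sum_ne_top.2 fun n _ => ENNReal.pow_ne_top ENNReal.ofReal_ne_top
  have hVA : ∀ g, V g ≤ A := by
    intro g
    refine Finset.sum_le_sum fun n _ => ?_
    calc S ^ n * cn m n g ≤ S ^ n * 1 := by gcongr; exact cn_le_one hm n g
      _ = S ^ n := mul_one _
  have hVs : ∑' g, V g ≤ A := by
    simp only [hV, VN]
    rw [Summable.tsum_finsetSum (fun _ _ => ENNReal.summable)]
    refine Finset.sum_le_sum fun n _ => ?_
    rw [ENNReal.tsum_mul_left]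
    calc S ^ n * ∑' g, cn m n g ≤ S ^ n * 1 := by gcongr; exact cn_sum hm n
      _ = S ^ n := mul_one _
  have hVf : ∀ g, V g ≠ ∞ := fun g => ne_top_of_le_ne_top hAf (hVA g)
  set f : G → ℝ := fun g => (V g).toReal with hf
  have hf0 : ∀ g, 0 ≤ f g := fun g => ENNReal.toReal_nonneg
  have hfV : ∀ g, ENNReal.ofReal (f g) = V g := fun g => ENNReal.ofReal_toReal (hVf g)
  have hqV : qn f = ∑' g, V g * V g := by
    unfold qn; congr 1; ext1 g
    rw [sq, ENNReal.ofReal_mul (hf0 g), hfV]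
  have hq : qn f ≠ ∞ := by
    refine ne_top_of_le_ne_top (b := A * A) (by finiteness) ?_
    rw [hqV]
    calc ∑' g, V g * V g ≤ ∑' g, A * V g :=
          ENNReal.tsum_le_tsum fun g => mul_le_mul' (hVA g) le_rfl
      _ = A * ∑' g, V g := ENNReal.tsum_mul_left
      _ ≤ A * A := by gcongr
  have hbV : bform m f = ∑' g, (∑' h, m h * V (h⁻¹ * g)) * V g := by
    unfold bform
    simp_rw [← ENNReal.tsum_mul_left, ← ENNReal.tsum_mul_right]
    rw [ENNReal.tsum_comm]
    congr 1; ext1 g; congr 1; ext1 h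
    rw [ENNReal.ofReal_mul (hf0 _), hfV, hfV]; ring
  have hmain : qn f ≤ V 1 + S * bform m f := by
    rw [hqV, hbV]
    calc ∑' g, V g * V g ≤ ∑' g, (cn m 0 g * V g + S * ((∑' h, m h * V (h⁻¹ * g)) * V g)) := by
          refine ENNReal.tsum_le_tsum fun g => ?_
          calc V g * V g ≤ (cn m 0 g + S * ∑' h, m h * V (h⁻¹ * g)) * V g :=
                mul_le_mul' (VN_le m S N g) le_rfl
            _ = _ := by ring
      _ = _ := by
          rw [ENNReal.tsum_add, ENNReal.tsum_mul_left]
          congr 1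
          rw [tsum_eq_single 1]
          · rw [cn_zero_one, one_mul]
          · intro b hb; rw [cn_zero_ne m hb, zero_mul]
  set X := (qn f).toReal with hX
  have hX0 : 0 ≤ X := ENNReal.toReal_nonneg
  have hge : ∀ g, f g ^ 2 ≤ X := by
    intro g
    have : ENNReal.ofReal (f g ^ 2) ≤ qn f :=
      ENNReal.le_tsum (f := fun g => ENNReal.ofReal (f g ^ 2)) g
    have := ENNReal.toReal_mono hq this
    rwa [ENNReal.toReal_ofReal (by positivity)] at this
  have hs0 : 0 ≤ s := by rw [hs]; linarith
  have hle : X ≤ f 1 + s * ((1 - κ) * X) := by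
    have h1 : qn f ≤ ENNReal.ofReal (f 1 + s * ((1 - κ) * X)) := by
      rw [ENNReal.ofReal_add (hf0 1) (mul_nonneg hs0 (mul_nonneg (by linarith) hX0)),
        ENNReal.ofReal_mul hs0, hfV]
      exact hmain.trans (add_le_add le_rfl (mul_le_mul' le_rfl (H f hf0 hq)))
    exact ENNReal.toReal_le_of_le_ofReal (add_nonneg (hf0 1)
      (mul_nonneg hs0 (mul_nonneg (by linarith) hX0))) h1
  have h2 : κ / 2 * X ≤ f 1 := by rw [hs] at hle; nlinarith [mul_nonneg (sq_nonneg κ) hX0]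
  have h3 : f 1 ≤ 2 / κ := by
    rw [le_div_iff₀ hκ]
    by_contra hc
    push Not at hc
    have := hge 1
    nlinarith [hf0 1, mul_le_mul_of_nonneg_left this hκ.le]
  have h4 : X ≤ (2 / κ) ^ 2 := by
    have : X ≤ 2 / κ * f 1 := by
      rw [div_mul_eq_mul_div, le_div_iff₀ hκ]; linarith
    have : 2 / κ * f 1 ≤ 2 / κ * (2 / κ) := by gcongr
    nlinarith
  intro g
  rw [← hfV g]
  apply ENNReal.ofReal_le_ofReal
  exact abs_le_of_sq_le_sq' ((hge g).trans h4) (by positivity) |>.2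

theorem cn_bound (hG : NonElemHyperbolic G) {m : G → ℝ≥0∞} (hm : ∑' h, m h = 1)
    (hgen : Subgroup.closure {g : G | m g ≠ 0} = ⊤) :
    ∃ a B : ℝ, 0 < a ∧ 1 ≤ B ∧ ∀ n g, (cn m n g).toReal ≤ B * Real.exp (-a * n) := by
  obtain ⟨s, B, hs, hB, H⟩ := VN_bound hG hm hgen
  refine ⟨Real.log s, B, Real.log_pos hs, hB, fun n g => ?_⟩
  have h1 : ENNReal.ofReal s ^ n * cn m n g ≤ ENNReal.ofReal B := by
    refine le_trans ?_ (H (n + 1) g)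
    unfold VN
    exact Finset.single_le_sum (f := fun n => ENNReal.ofReal s ^ n * cn m n g)
      (fun _ _ => bot_le) (Finset.mem_range.2 n.lt_succ_self)
  have h2 := ENNReal.toReal_mono ENNReal.ofReal_ne_top h1
  rw [ENNReal.toReal_mul, ENNReal.toReal_pow, ENNReal.toReal_ofReal (by linarith),
    ENNReal.toReal_ofReal (by linarith)] at h2
  have h3 : Real.exp (-Real.log s * n) = (s ^ n)⁻¹ := by
    rw [neg_mul, Real.exp_neg, mul_comm, Real.exp_nat_mul, Real.exp_log (by linarith)]
  rw [h3, ← div_eq_mul_inv, le_div_iff₀ (by positivity)]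
  linarith

end Walk

section Walk2

theorem uu_decay (hG : NonElemHyperbolic G) {m : G → ℝ≥0∞} (hm : ∑' h, m h = 1)
    (hgen : Subgroup.closure {g : G | m g ≠ 0} = ⊤) (len : G → ℝ) (len1 : len 1 = 0)
    (hlen : ∀ g h, len (g * h) ≤ len g + len h) {lam : ℝ} (hlam : 0 < lam)
    (hM : ∑' g, m g * ENNReal.ofReal (Real.exp (lam * len g)) ≠ ∞) :
    ∃ C ε : ℝ, 0 < C ∧ 0 < ε ∧ ∀ g, uu m g ≤ ENNReal.ofReal (C * Real.exp (-ε * len g)) := by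
  obtain ⟨a, B, ha, hB, H⟩ := cn_bound hG hm hgen
  set Me := ∑' g, m g * ENNReal.ofReal (Real.exp (lam * len g)) with hMe
  set M := Me.toReal with hMd
  have hmom : ∀ n g, (cn m n g).toReal * Real.exp (lam * len g) ≤ M ^ n := by
    intro n g
    have h1 := cn_le_moment (m := m) (fun g => ENNReal.ofReal (Real.exp (lam * len g)))
      (by simp [len1]) (fun g h => by
        rw [← ENNReal.ofReal_mul (Real.exp_pos _).le, ← Real.exp_add]
        apply ENNReal.ofReal_le_ofReal
        apply Real.exp_le_exp.2
        nlinarith [hlen g h]) n g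
    have h2 := ENNReal.toReal_mono (by finiteness) h1
    rwa [ENNReal.toReal_mul, ENNReal.toReal_pow, ENNReal.toReal_ofReal (Real.exp_pos _).le] at h2
  have hcf : ∀ n g, cn m n g ≠ ∞ := fun n g =>
    ne_top_of_le_ne_top ENNReal.one_ne_top (cn_le_one hm n g)
  have hM0 : 0 ≤ M := ENNReal.toReal_nonneg
  obtain ⟨k, hk⟩ := exists_nat_gt ((M) / a)
  have hMk : M ≤ Real.exp (a * k) := by
    have : M < a * k := by rw [div_lt_iff₀ ha] at hk; linarith
    linarith [Real.add_one_le_exp (a * k)]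
  set K : ℝ := ((k + 2 : ℕ) : ℝ) with hK
  have hK0 : 0 < K := by rw [hK]; positivity
  set ρ := Real.exp (-a / K) with hρ
  have hρ1 : ρ < 1 := by rw [hρ, Real.exp_lt_one_iff]; exact div_neg_of_neg_of_pos (by linarith) hK0
  have hρ0 : 0 ≤ ρ := (Real.exp_pos _).le
  have key : ∀ n g, (cn m n g).toReal ≤ B * Real.exp (-(lam / K) * len g) * ρ ^ n := by
    intro n g
    set c := (cn m n g).toReal with hc
    have hc0 : 0 ≤ c := ENNReal.toReal_nonneg
    have h1 : c ≤ M ^ n * Real.exp (-(lam * len g)) := by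
      rw [Real.exp_neg, ← div_eq_mul_inv, le_div_iff₀ (Real.exp_pos _)]; exact hmom n g
    have h2 := H n g
    refine le_of_pow_le_pow_left₀ (n := k + 2) (by omega) (by positivity) ?_
    have e1 : Real.exp (-(lam / K) * len g) ^ (k + 2) = Real.exp (-(lam * len g)) := by
      rw [← Real.exp_nat_mul]; congr 1; rw [← hK]; field_simp
    have e2 : (ρ ^ n) ^ (k + 2) = Real.exp (-a * n) := by
      rw [← pow_mul, mul_comm, pow_mul, hρ, ← Real.exp_nat_mul, ← Real.exp_nat_mul]
      congr 1; rw [← hK]; field_simp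
    rw [mul_pow, mul_pow, e1, e2]
    calc c ^ (k + 2) = c ^ (k + 1) * c := by ring
      _ ≤ (B * Real.exp (-a * n)) ^ (k + 1) * (M ^ n * Real.exp (-(lam * len g))) := by gcongr
      _ ≤ (B * Real.exp (-a * n)) ^ (k + 1) *
          (Real.exp (a * k) ^ n * Real.exp (-(lam * len g))) := by gcongr
      _ = B ^ (k + 1) * Real.exp (-(lam * len g)) *
          (Real.exp (-a * n) ^ (k + 1) * Real.exp (a * k) ^ n) := by rw [mul_pow]; ring
      _ = B ^ (k + 1) * Real.exp (-(lam * len g)) * Real.exp (-a * n) := by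
          congr 1
          rw [← Real.exp_nat_mul, ← Real.exp_nat_mul, ← Real.exp_add]
          congr 1; push_cast; ring
      _ ≤ B ^ (k + 2) * Real.exp (-(lam * len g)) * Real.exp (-a * n) := by
          gcongr
          norm_num
  refine ⟨B * (1 - ρ)⁻¹, lam / K, ?_, by positivity, fun g => ?_⟩
  · have : 0 < 1 - ρ := by linarith
    positivity
  have hsum : HasSum (fun n : ℕ => B * Real.exp (-(lam / K) * len g) * ρ ^ n)
      (B * Real.exp (-(lam / K) * len g) * (1 - ρ)⁻¹) :=
    (hasSum_geometric_of_lt_one hρ0 hρ1).mul_left _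
  calc uu m g ≤ ∑' n : ℕ, ENNReal.ofReal (B * Real.exp (-(lam / K) * len g) * ρ ^ n) := by
        refine ENNReal.tsum_le_tsum fun n => ?_
        rw [← ENNReal.ofReal_toReal (hcf n g)]
        exact ENNReal.ofReal_le_ofReal (key n g)
    _ = ENNReal.ofReal (B * Real.exp (-(lam / K) * len g) * (1 - ρ)⁻¹) := by
        rw [← hsum.tsum_eq, ENNReal.ofReal_tsum_of_nonneg (fun n => by positivity) hsum.summable]
    _ = _ := by congr 1; ring

theorem fk_succ_self (m : G → ℝ≥0∞) (n : ℕ) (y : G) : fk m y (n + 1) y = 0 := by simp [fk]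
theorem fk_zero_self (m : G → ℝ≥0∞) (y : G) : fk m y 0 y = 1 := by simp [fk]
theorem fk_zero_ne (m : G → ℝ≥0∞) {x y : G} (h : x ≠ y) : fk m y 0 x = 0 := by simp [fk, h]
theorem fk_succ_ne (m : G → ℝ≥0∞) (n : ℕ) {x y : G} (h : x ≠ y) :
    fk m y (n + 1) x = ∑' a, m a * fk m y n (x * a) := by simp [fk, h]

theorem renewal (m : G → ℝ≥0∞) (n : ℕ) (x y z : G) :
    ∑ p ∈ Finset.HasAntidiagonal.antidiagonal n, fk m y p.1 x * cn m p.2 (y⁻¹ * z) ≤ cn m n (x⁻¹ * z) ∧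
    (z = y → ∑ p ∈ Finset.HasAntidiagonal.antidiagonal n, fk m y p.1 x * cn m p.2 (y⁻¹ * z)
      = cn m n (x⁻¹ * z)) := by
  by_cases hxy : x = y
  · subst hxy
    have : ∑ p ∈ Finset.HasAntidiagonal.antidiagonal n, fk m x p.1 x * cn m p.2 (x⁻¹ * z) = cn m n (x⁻¹ * z) := by
      cases n with
      | zero => simp [fk_zero_self]
      | succ n =>
        rw [Finset.Nat.sum_antidiagonal_succ]
        simp [fk_zero_self, fk_succ_self]
    exact ⟨this.le, fun _ => this⟩
  · induction n generalizing x with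
    | zero =>
      simp only [Finset.HasAntidiagonal.antidiagonal_zero, Finset.sum_singleton, fk_zero_ne m hxy, zero_mul]
      refine ⟨bot_le, fun h => ?_⟩
      rw [cn_zero_ne]
      intro h2; rw [inv_mul_eq_one] at h2; exact hxy (h2.trans h)
    | succ n ih =>
      have ih' : ∀ x, ∑ p ∈ Finset.HasAntidiagonal.antidiagonal n, fk m y p.1 x * cn m p.2 (y⁻¹ * z)
          ≤ cn m n (x⁻¹ * z) ∧
          (z = y → ∑ p ∈ Finset.HasAntidiagonal.antidiagonal n, fk m y p.1 x * cn m p.2 (y⁻¹ * z)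
          = cn m n (x⁻¹ * z)) := by
        intro x
        by_cases hx : x = y
        · subst hx
          have : ∑ p ∈ Finset.HasAntidiagonal.antidiagonal n, fk m x p.1 x * cn m p.2 (x⁻¹ * z)
              = cn m n (x⁻¹ * z) := by
            cases n with
            | zero => simp [fk_zero_self]
            | succ n =>
              rw [Finset.Nat.sum_antidiagonal_succ]
              simp [fk_zero_self, fk_succ_self]
          exact ⟨this.le, fun _ => this⟩
        · exact ih x hx
      have e : ∑ p ∈ Finset.HasAntidiagonal.antidiagonal (n + 1), fk m y p.1 x * cn m p.2 (y⁻¹ * z) =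
          ∑' a, m a * ∑ p ∈ Finset.HasAntidiagonal.antidiagonal n, fk m y p.1 (x * a) * cn m p.2 (y⁻¹ * z) := by
        rw [Finset.Nat.sum_antidiagonal_succ, fk_zero_ne m hxy, zero_mul, zero_add]
        simp_rw [Finset.mul_sum]
        rw [Summable.tsum_finsetSum (fun _ _ => ENNReal.summable)]
        refine Finset.sum_congr rfl fun p _ => ?_
        rw [fk_succ_ne m _ hxy, ← ENNReal.tsum_mul_right]
        congr 1; ext1 a; ring
      rw [e, cn_succ]
      constructor
      · refine ENNReal.tsum_le_tsum fun a => mul_le_mul' le_rfl ?_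
        have := (ih' (x * a)).1
        rwa [mul_inv_rev, mul_assoc] at this
      · intro h
        congr 1; ext1 a
        have := (ih' (x * a)).2 h
        rw [this, mul_inv_rev, mul_assoc]

theorem tsum_mul_antidiag (f g : ℕ → ℝ≥0∞) :
    (∑' n, f n) * ∑' n, g n = ∑' n, ∑ p ∈ Finset.HasAntidiagonal.antidiagonal n, f p.1 * g p.2 := by
  rw [← ENNReal.tsum_mul_right]
  simp_rw [← ENNReal.tsum_mul_left]
  rw [← ENNReal.tsum_prod (f := fun a b => f a * g b)]
  rw [← (Finset.HasAntidiagonal.sigmaAntidiagonalEquivProd (A := ℕ)).tsum_eq]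
  rw [ENNReal.tsum_sigma']
  congr 1; ext1 n
  rw [← Finset.tsum_subtype]
  rfl

/-- total hitting probability -/
def Fe (m : G → ℝ≥0∞) (x y : G) : ℝ≥0∞ := ∑' n, fk m y n x

theorem Fe_le (m : G → ℝ≥0∞) (x y z : G) :
    Fe m x y * uu m (y⁻¹ * z) ≤ uu m (x⁻¹ * z) := by
  unfold Fe uu
  rw [tsum_mul_antidiag]
  exact ENNReal.tsum_le_tsum fun n => (renewal m n x y z).1

theorem Fe_eq (m : G → ℝ≥0∞) (x y : G) :
    Fe m x y * uu m 1 = uu m (x⁻¹ * y) := by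
  have : uu m (1 : G) = uu m (y⁻¹ * y) := by simp
  rw [this]
  unfold Fe uu
  rw [tsum_mul_antidiag]
  congr 1; ext1 n
  exact (renewal m n x y y).2 rfl

/-- decomposition of lists -/
def listEquiv (α : Type*) : List α ≃ Option (α × List α) where
  toFun l := match l with
    | [] => none
    | a :: l => some (a, l)
  invFun o := match o with
    | none => []
    | some p => p.1 :: p.2
  left_inv l := by cases l <;> rfl
  right_inv o := by rcases o with _ | ⟨a, l⟩ <;> rfl

theorem tsum_list {α : Type*} (f : List α → ℝ≥0∞) :
    ∑' l, f l = f [] + ∑' a, ∑' l, f (a :: l) := by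
  rw [← (listEquiv α).symm.tsum_eq, ← (Equiv.optionEquivSumPUnit.{0} (α × List α)).symm.tsum_eq,
    Summable.tsum_sum ENNReal.summable ENNReal.summable, add_comm]
  congr 1
  · simp [listEquiv]
  · rw [← ENNReal.tsum_prod]; rfl

theorem fh_nil (x y : G) : IsFirstHitPath x y [] ↔ x = y := by
  simp [IsFirstHitPath, walkPositions]

theorem fh_cons (x y a : G) (l : List G) :
    IsFirstHitPath x y (a :: l) ↔ x ≠ y ∧ IsFirstHitPath (x * a) y l := by
  unfold IsFirstHitPath walkPositions
  rw [List.scanl_cons]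
  have hne : List.scanl (fun p a => p * a) (x * a) l ≠ [] := by
    intro h; have := congrArg List.length h; simp at this
  rw [List.dropLast_cons_of_ne_nil hne, List.getLast?_cons_of_ne_nil hne]
  simp only [List.mem_cons, not_or]
  constructor
  · rintro ⟨h1, h2, h3⟩; exact ⟨fun h => h2 h.symm, h1, h3⟩
  · rintro ⟨h1, h2, h3⟩; exact ⟨h2, fun h => h1 h.symm, h3⟩

open scoped Classical in
theorem fk_list (m : G → ℝ≥0∞) (n : ℕ) (x y : G) :
    ∑' l : List G, (if l.length = n ∧ IsFirstHitPath x y l then (l.map m).prod else 0)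
      = fk m y n x := by
  induction n generalizing x with
  | zero =>
    rw [tsum_list]
    simp [fh_nil, fk]
  | succ n ih =>
    rw [tsum_list]
    by_cases h : x = y
    · simp [fh_cons, h, fk]
    · rw [fk_succ_ne m n h]
      simp only [← ih, ← ENNReal.tsum_mul_left]
      simp [fh_cons, h]

theorem Fe_list (m : G → ℝ≥0∞) (x y : G) :
    ∑' l : {l : List G // IsFirstHitPath x y l}, ((l : List G).map m).prod = Fe m x y := by
  classical
  unfold Fe
  simp_rw [← fk_list]
  rw [ENNReal.tsum_comm]
  refine (tsum_subtype {l : List G | IsFirstHitPath x y l} (fun l => (l.map m).prod)).trans ?_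
  congr 1; ext1 l
  rw [tsum_eq_single l.length]
  · simp [Set.indicator_apply]
  · intro n hn; rw [if_neg]; rintro ⟨h, _⟩; exact hn h.symm

theorem hitProb_eq_Fe {μ : G → ℝ} (hμ : ∀ g, 0 ≤ μ g) (x y : G) :
    hitProb μ x y = (Fe (fun g => ENNReal.ofReal (μ g)) x y).toReal := by
  rw [← Fe_list, ENNReal.tsum_toReal_eq]
  · unfold hitProb
    congr 1; ext1 l
    generalize (l : List G) = l
    induction l with
    | nil => simp
    | cons a l ih => simp [ih, ENNReal.toReal_mul, ENNReal.toReal_ofReal (hμ a)]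
  · intro l
    generalize (l : List G) = l
    induction l with
    | nil => simp
    | cons a l ih => simp only [List.map_cons, List.prod_cons]; finiteness

end Walk2

section GreenFacts

theorem hitProb_facts (hG : NonElemHyperbolic G)
    (μ : G → ℝ) (hprob : IsProbDensity μ) (hsymm : IsSymmetric μ) (hgen : GeneratesSupp μ)
    (S : Finset G) (hS : Generates S) (hexp : HasExpMoment (wordDist S) μ) :
    ∃ f : G → ℝ, (∀ x y, hitProb μ x y = f (x⁻¹ * y)) ∧ (∀ g, 0 < f g) ∧ f 1 = 1 ∧
      (∀ g, f g⁻¹ = f g) ∧ (∀ a b, f a * f b ≤ f (a * b)) ∧ (∀ g, g ≠ 1 → f g < 1) ∧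
      ∃ C ε : ℝ, 0 < C ∧ 0 < ε ∧ ∀ g, f g ≤ C * Real.exp (-ε * wordLength S g) := by
  obtain ⟨hμ0, hμ1⟩ := hprob
  obtain ⟨lam, hlam, hsum⟩ := hexp
  set m : G → ℝ≥0∞ := fun g => ENNReal.ofReal (μ g) with hmd
  have hm : ∑' h, m h = 1 := by
    rw [hmd, ← ENNReal.ofReal_tsum_of_nonneg hμ0 hμ1.summable, hμ1.tsum_eq, ENNReal.ofReal_one]
  have hs : ∀ g, m g⁻¹ = m g := fun g => by simp only [hmd, hsymm g]
  have hset : {g : G | m g ≠ 0} = {g : G | μ g ≠ 0} := by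
    ext g
    simp only [hmd, ne_eq, ENNReal.ofReal_eq_zero, not_le, Set.mem_ofPred_eq]
    exact ⟨fun h => h.ne', fun h => lt_of_le_of_ne (hμ0 g) (Ne.symm h)⟩
  have hgen' : Subgroup.closure {g : G | m g ≠ 0} = ⊤ := by rw [hset]; exact hgen
  have hM : ∑' g, m g * ENNReal.ofReal (Real.exp (lam * (wordLength S g : ℝ))) ≠ ∞ := by
    have : ∀ g, m g * ENNReal.ofReal (Real.exp (lam * (wordLength S g : ℝ))) =
        ENNReal.ofReal (Real.exp (lam * wordDist S 1 g) * μ g) := by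
      intro g
      simp only [hmd, wordDist, inv_one, one_mul]
      rw [ENNReal.ofReal_mul (Real.exp_pos _).le, mul_comm]
    simp_rw [this]
    exact hsum.tsum_ofReal_ne_top
  obtain ⟨C, ε, hC, hε, hdec⟩ := uu_decay hG hm hgen' (fun g => (wordLength S g : ℝ))
    (by simp [wl_one]) (fun g h => by exact_mod_cast wl_mul hS g h) hlam hM
  have hfin : ∀ g, uu m g ≠ ∞ := fun g => ne_top_of_le_ne_top ENNReal.ofReal_ne_top (hdec g)
  have hu1 : 1 ≤ uu m 1 := by
    rw [uu_rec, cn_zero_one]; exact le_self_add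
  have hu10 : uu m 1 ≠ 0 := fun h => by rw [h] at hu1; simp at hu1
  have hFe : ∀ x y, Fe m x y = uu m (x⁻¹ * y) / uu m 1 := by
    intro x y
    rw [ENNReal.eq_div_iff hu10 (hfin 1), mul_comm, Fe_eq]
  have hsup : ∀ a b, uu m a * uu m b ≤ uu m (a * b) * uu m 1 := by
    intro a b
    have h1 := Fe_le m 1 a (a * b)
    have h2 := Fe_eq m 1 a
    simp only [inv_one, one_mul, inv_mul_cancel_left] at h1 h2
    rw [← h2]
    calc Fe m 1 a * uu m 1 * uu m b = Fe m 1 a * uu m b * uu m 1 := by ring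
      _ ≤ _ := by gcongr
  have hpos : ∀ g, uu m g ≠ 0 := by
    intro g
    have hh : g ∈ Subgroup.closure {g : G | m g ≠ 0} := by rw [hgen']; trivial
    induction hh using Subgroup.closure_induction with
    | mem x hx =>
      have h1 : m x * uu m (x⁻¹ * x) ≤ uu m x := by
        rw [uu_rec m x]
        exact (ENNReal.le_tsum (f := fun h => m h * uu m (h⁻¹ * x)) x).trans le_add_self
      rw [inv_mul_cancel] at h1
      intro h0
      rw [h0] at h1
      have := le_antisymm h1 bot_le
      exact (mul_ne_zero hx hu10) this
    | one => exact hu10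
    | mul x y _ _ hx hy =>
      intro h0
      have h1 := hsup x y
      rw [h0, zero_mul] at h1
      exact (mul_ne_zero hx hy) (le_antisymm h1 bot_le)
    | inv x _ hx => rw [uu_inv hs]; exact hx
  have hne : ∀ g, g ≠ 1 → uu m g < uu m 1 := by
    intro g hg
    have h1 : ∀ g, uu m g ≤ uu m 1 := by
      intro g
      have := hsup g g⁻¹
      rw [uu_inv hs, mul_inv_cancel] at this
      by_contra hc
      push Not at hc
      exact absurd this (not_le.2 (ENNReal.mul_lt_mul hc hc))
    refine lt_of_le_of_ne (h1 g) fun he => ?_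
    have h2 : ∀ k, uu m k ≤ uu m (k * g) := by
      intro k
      have := hsup k g
      rw [he] at this
      exact (ENNReal.mul_le_mul_iff_left hu10 (hfin 1)).1 this
    have h3 : ∀ k, uu m (k * g) ≤ uu m k := by
      intro k
      have := hsup (k * g) g⁻¹
      rw [uu_inv hs, he, mul_inv_cancel_right] at this
      exact (ENNReal.mul_le_mul_iff_left hu10 (hfin 1)).1 this
    have h4 := uu_rec m 1
    have h5 := uu_rec m g
    rw [cn_zero_ne m hg, zero_add] at h5
    have h6 : ∑' h, m h * uu m (h⁻¹ * g) = ∑' h, m h * uu m (h⁻¹ * 1) := by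
      congr 1; ext1 h; rw [mul_one, le_antisymm (h3 h⁻¹) (h2 h⁻¹)]
    rw [← h6, ← h5, he, cn_zero_one] at h4
    have h7 : uu m 1 < 1 + uu m 1 := by
      rw [add_comm]; exact ENNReal.lt_add_right (hfin 1) one_ne_zero
    exact absurd h4 h7.ne
  have hU : 0 < (uu m 1).toReal := ENNReal.toReal_pos hu10 (hfin 1)
  refine ⟨fun g => (uu m g).toReal / (uu m 1).toReal, ?_, ?_, ?_, ?_, ?_, ?_, ?_⟩
  · intro x y
    rw [hitProb_eq_Fe hμ0, hFe, ENNReal.toReal_div]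
  · intro g
    exact div_pos (ENNReal.toReal_pos (hpos g) (hfin g)) hU
  · exact div_self hU.ne'
  · intro g; simp only [uu_inv hs]
  · intro a b
    have := ENNReal.toReal_mono (by finiteness [hfin (a * b), hfin 1]) (hsup a b)
    rw [ENNReal.toReal_mul, ENNReal.toReal_mul] at this
    rw [div_mul_div_comm, div_le_div_iff₀ (by positivity) hU]
    nlinarith
  · intro g hg
    rw [div_lt_one hU]
    exact ENNReal.toReal_strict_mono (hfin 1) (hne g hg)
  · refine ⟨C / (uu m 1).toReal, ε, by positivity, hε, fun g => ?_⟩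
    have := ENNReal.toReal_le_of_le_ofReal (by positivity) (hdec g)
    rw [div_mul_eq_mul_div]
    exact div_le_div_of_nonneg_right this hU.le

theorem green_facts (hG : NonElemHyperbolic G)
    (μ : G → ℝ) (hprob : IsProbDensity μ) (hsymm : IsSymmetric μ) (hgen : GeneratesSupp μ)
    (S : Finset G) (hS : Generates S) (hexp : HasExpMoment (wordDist S) μ) :
    (∀ x y, 0 < hitProb μ x y) ∧ IsMetricFun (greenDist μ) ∧ LeftInvariant (greenDist μ) ∧
      ∃ Λ c : ℝ, 1 ≤ Λ ∧ 0 ≤ c ∧ ∀ x y,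
        wordDist S x y / Λ - c ≤ greenDist μ x y ∧ greenDist μ x y ≤ Λ * wordDist S x y := by
  obtain ⟨f, hf, f0, f1, finv, fmul, flt, C, ε, hC, hε, fdec⟩ :=
    hitProb_facts hG μ hprob hsymm hgen S hS hexp
  have hgd : ∀ x y, greenDist μ x y = - Real.log (f (x⁻¹ * y)) := fun x y => by
    rw [greenDist, hf]
  have hle1 : ∀ g, f g ≤ 1 := by
    intro g
    by_cases h : g = 1
    · rw [h, f1]
    · exact (flt g h).le
  have hsub : ∀ a b, - Real.log (f (a * b)) ≤ - Real.log (f a) + - Real.log (f b) := by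
    intro a b
    have := Real.log_le_log (mul_pos (f0 a) (f0 b)) (fmul a b)
    rw [Real.log_mul (f0 a).ne' (f0 b).ne'] at this
    linarith
  have hnn : ∀ a, 0 ≤ - Real.log (f a) := fun a => by
    have := Real.log_nonpos (f0 a).le (hle1 a); linarith
  refine ⟨fun x y => by rw [hf]; exact f0 _, ⟨?_, ?_, ?_, ?_⟩, ?_, ?_⟩
  · intro x; rw [hgd]; simp [f1]
  · intro x y hxy
    rw [hgd]
    have := Real.log_neg (f0 (x⁻¹ * y)) (flt _ (fun h => hxy (inv_mul_eq_one.1 h)))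
    linarith
  · intro x y; rw [hgd, hgd, ← finv (x⁻¹ * y)]; simp
  · intro x y z
    rw [hgd, hgd, hgd]
    have := hsub (x⁻¹ * y) (y⁻¹ * z)
    rwa [mul_assoc, mul_inv_cancel_left] at this
  · intro g x y; rw [hgd, hgd]; congr 3; group
  · set L : ℝ := ∑ s ∈ S, - Real.log (f s) with hL
    have hL0 : 0 ≤ L := Finset.sum_nonneg fun s _ => hnn s
    have hsl : ∀ s ∈ S, - Real.log (f s) ≤ L := fun s hs =>
      Finset.single_le_sum (f := fun s => - Real.log (f s)) (fun s _ => hnn s) hs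
    have hup : ∀ g, - Real.log (f g) ≤ L * wordLength S g := by
      intro g
      obtain ⟨l, h1, h2, h3⟩ := wl_exists hS g
      rw [← h1, ← h3]
      clear h1 h3
      induction l with
      | nil => simp [f1]
      | cons a l ih =>
        have h4 := ih (fun b hb => h2 b (List.mem_cons_of_mem _ hb))
        have h5 : - Real.log (f a) ≤ L := by
          rcases h2 a List.mem_cons_self with h | h
          · exact hsl a h
          · rw [← finv a]; exact hsl _ h
        have h6 := hsub a l.prod
        rw [List.prod_cons, List.length_cons]
        push_cast
        linarith
    set Λ := max 1 (max L (1 / ε)) with hΛ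
    have hΛ1 : 1 ≤ Λ := le_max_left _ _
    have hΛL : L ≤ Λ := (le_max_left _ _).trans (le_max_right _ _)
    have hΛε : 1 / ε ≤ Λ := (le_max_right _ _).trans (le_max_right _ _)
    refine ⟨Λ, max 0 (Real.log C), hΛ1, le_max_left _ _, fun x y => ⟨?_, ?_⟩⟩
    · rw [hgd]
      unfold wordDist
      set n : ℝ := (wordLength S (x⁻¹ * y) : ℝ)
      have hn : 0 ≤ n := Nat.cast_nonneg _
      have h1 := Real.log_le_log (f0 _) (fdec (x⁻¹ * y))
      rw [Real.log_mul hC.ne' (Real.exp_pos _).ne', Real.log_exp] at h1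
      have h2 : n / Λ ≤ ε * n := by
        rw [div_le_iff₀ (by linarith)]
        rw [div_le_iff₀ hε] at hΛε
        nlinarith
      have h3 : Real.log C ≤ max 0 (Real.log C) := le_max_right _ _
      linarith
    · rw [hgd]
      refine (hup _).trans ?_
      unfold wordDist
      gcongr

theorem green_LIM {d : G → G → ℝ} (h1 : IsMetricFun d) (h2 : LeftInvariant d) : LIM d where
  refl := h1.refl
  nonneg x y := by
    have := h1.triangle x y x
    rw [h1.refl, h1.symm y x] at this
    linarith
  symm := h1.symm
  triangle := h1.triangle
  inv := h2

end GreenFacts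

section AnconaHyp

theorem near_of_gromov {S : Finset G} (hS : Generates S) {δ : ℝ}
    (hh : IsHyperbolicWith (wordDist S) δ) {x y v : G} {r : ℝ}
    (h : gromov (wordDist S) v x y ≤ r) : NearWordGeodesic S x y v (r + 2 * δ + 1) := by
  have hd := wordDist_LIM hS
  obtain ⟨n, p, hp, p0, pn, hn⟩ := wordDist_geod hS x y
  set t := gromov (wordDist S) x y v with ht
  have ht0 : 0 ≤ t := gr_nonneg hd _ _ _
  have htn : t ≤ n := by rw [← hn]; exact gr_le hd _ _ _
  have hi1 : (⌊t⌋₊ : ℝ) ≤ t := Nat.floor_le ht0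
  have hi2 : t < ⌊t⌋₊ + 1 := Nat.lt_floor_add_one t
  set i := ⌊t⌋₊
  have hin : i ≤ n := by exact_mod_cast hi1.trans htn
  refine ⟨n, p, hp, p0, pn, i, hin, ?_⟩
  have h4 := hyp4 hh hd.symm v (p i) x y
  have e1 : wordDist S (p i) x = i := by
    rw [← p0, hp i 0 hin (Nat.zero_le _)]; simp
  have e2 : wordDist S (p i) y = n - i := by
    rw [← pn, hp i n hin le_rfl, abs_sub_comm, abs_of_nonneg]
    have : (i : ℝ) ≤ n := by exact_mod_cast hin
    linarith
  rw [e1, e2, hn] at h4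
  unfold gromov at h ht
  have s1 := hd.symm v x
  have s2 := hd.symm v y
  have s3 := hd.symm y x
  rcases max_cases (wordDist S v x + ((n : ℝ) - i)) (wordDist S v y + i) with ⟨h5, _⟩ | ⟨h5, _⟩ <;>
    rw [h5] at h4 <;> linarith

theorem ancona_hyp {S : Finset G} (hS : Generates S) {δ : ℝ} (hδ : 0 ≤ δ)
    (hh : IsHyperbolicWith (wordDist S) δ) {d : G → G → ℝ} (hdd : LIM d)
    (hA : ∀ r : ℝ, 0 ≤ r → ∃ K : ℝ, ∀ x y v, NearWordGeodesic S x y v r →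
      d x v + d v y ≤ d x y + K) : IsHyperbolic d := by
  have hd := wordDist_LIM hS
  obtain ⟨K, hK⟩ := hA (1 + δ + 2 * δ + 1) (by linarith)
  have key : ∀ v x y, gromov (wordDist S) v x y ≤ 1 + δ → d x v + d v y ≤ d x y + K :=
    fun v x y h => hK x y v (near_of_gromov hS hh h)
  have hK0 : 0 ≤ K := by
    have := key 1 1 1 (by simp only [gromov, hd.refl]; linarith)
    rw [hdd.refl] at this; linarith
  have main : ∀ w x y z, gromov (wordDist S) w x y ≤ gromov (wordDist S) w x z →
      gromov d w x y ≤ gromov d w y z + 3 * K := by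
    intro w x y z hle
    obtain ⟨n, p, hp, p0, pn, hn⟩ := wordDist_geod hS w x
    set t := gromov (wordDist S) w x y with ht
    have ht0 : 0 ≤ t := gr_nonneg hd _ _ _
    have htn : t ≤ n := by rw [← hn]; exact gr_le hd _ _ _
    have hi1 : (⌊t⌋₊ : ℝ) ≤ t := Nat.floor_le ht0
    have hi2 : t < ⌊t⌋₊ + 1 := Nat.lt_floor_add_one t
    set i := ⌊t⌋₊
    have hin : i ≤ n := by exact_mod_cast hi1.trans htn
    set P := p i
    have e1 : wordDist S P w = i := by
      rw [← p0, hp i 0 hin (Nat.zero_le _)]; simp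
    have e2 : wordDist S P x = n - i := by
      rw [← pn, hp i n hin le_rfl, abs_sub_comm, abs_of_nonneg]
      have : (i : ℝ) ≤ n := by exact_mod_cast hin
      linarith
    have a1 : ∀ y, (i : ℝ) ≤ gromov (wordDist S) w x y →
        wordDist S P y ≤ wordDist S w y - i + 2 * δ := by
      intro y hy
      have h4 := hyp4 hh hd.symm P y w x
      rw [e1, e2, hn] at h4
      unfold gromov at hy
      have s1 := hd.symm x w
      have s2 := hd.symm y w
      have s3 := hd.symm y x
      rcases max_cases ((i : ℝ) + wordDist S y x) ((n : ℝ) - i + wordDist S y w) with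
        ⟨h5, _⟩ | ⟨h5, _⟩ <;> rw [h5] at h4 <;> linarith
    have b1 := a1 y hi1
    have b2 := a1 z (hi1.trans hle)
    have c1 := key P w y (by
      unfold gromov; rw [hd.symm w P, hd.symm y P, e1]; linarith)
    have c2 := key P w z (by
      unfold gromov; rw [hd.symm w P, hd.symm z P, e1]; linarith)
    have c3 := key P x y (by
      unfold gromov at ht ⊢
      rw [hd.symm x P, hd.symm y P, e2]
      have s1 := hd.symm x w
      have s2 := hd.symm y w
      linarith)
    have tr := hdd.triangle y P z
    have tr2 := hdd.triangle x P w
    have tr3 := hdd.triangle y P w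
    unfold gromov
    have s1 := hdd.symm P w
    have s2 := hdd.symm P y
    have s3 := hdd.symm y w
    have s4 := hdd.symm z w
    linarith
  refine ⟨3 * K, by linarith, fun w x y z => ?_⟩
  rcases le_total (gromov (wordDist S) w x y) (gromov (wordDist S) w x z) with h | h
  · have := main w x y z h
    have := min_le_left (gromov d w x y) (gromov d w x z)
    linarith
  · have := main w x z y h
    rw [gr_symm hdd w z y] at this
    have := min_le_right (gromov d w x y) (gromov d w x z)
    linarith

end AnconaHyp

section Morse

theorem lin_le_two_pow (A B : ℝ) : ∃ k0 : ℕ, ∀ n : ℕ, k0 ≤ n → A * n + B ≤ 2 ^ n := by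
  obtain ⟨k, hk⟩ := exists_nat_gt (|A| + |B|)
  refine ⟨max 4 k, fun n hn => ?_⟩
  have h4 : 4 ≤ n := (le_max_left _ _).trans hn
  have hkn : (k : ℝ) ≤ n := by exact_mod_cast (le_max_right _ _).trans hn
  have h1 : n ^ 2 ≤ 2 ^ n := by
    clear hkn hn
    induction n, h4 using Nat.le_induction with
    | base => norm_num
    | succ n hn ih => rw [pow_succ 2 n]; nlinarith
  have h2 : (n : ℝ) ^ 2 ≤ 2 ^ n := by exact_mod_cast h1
  have h3 : (4 : ℝ) ≤ n := by exact_mod_cast h4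
  nlinarith [le_abs_self A, le_abs_self B, abs_nonneg A, abs_nonneg B]

theorem chain_log {X : Type*} {g : X → X → ℝ} {δ B : ℝ} (hδ : 0 ≤ δ)
    (hg : ∀ a b c, min (g a b) (g b c) ≤ g a c + δ) (a : ℕ → X) (k : ℕ) :
    ∀ i m : ℕ, 1 ≤ m → m ≤ 2 ^ k → (∀ j, i ≤ j → j < i + m → B ≤ g (a j) (a (j + 1))) →
      B - k * δ ≤ g (a i) (a (i + m)) := by
  induction k with
  | zero =>
    intro i m h1 h2 h
    have : m = 1 := by simp at h2; omega
    subst this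
    have := h i le_rfl (by omega)
    simpa using this
  | succ k ih =>
    intro i m h1 h2 h
    push_cast
    by_cases hm : m ≤ 2 ^ k
    · have := ih i m h1 hm h
      linarith
    · push Not at hm
      have e1 := ih i (2 ^ k) Nat.one_le_two_pow le_rfl (fun j hj hj' => h j hj (by omega))
      have e2 := ih (i + 2 ^ k) (m - 2 ^ k) (by omega) (by rw [pow_succ] at h2; omega)
        (fun j hj hj' => h j (by omega) (by omega))
      rw [show i + 2 ^ k + (m - 2 ^ k) = i + m by omega] at e2
      have e3 := hg (a i) (a (i + 2 ^ k)) (a (i + m))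
      have e4 := le_min e1 e2
      linarith

variable {d : G → G → ℝ} {δ : ℝ}

/-- virtual distance -/
def vd (d : G → G → ℝ) (w z : G) (t : ℝ) (q : G) : ℝ := max (d w q - t) (d z q - (d w z - t))

theorem vd_hyp (hd : LIM d) (hh : IsHyperbolicWith d δ) (w z : G) (t : ℝ) (a b c : G) :
    min ((vd d w z t a + vd d w z t b - d a b) / 2) ((vd d w z t b + vd d w z t c - d b c) / 2)
      ≤ (vd d w z t a + vd d w z t c - d a c) / 2 + δ := by
  have key : vd d w z t b + d a c ≤ max (vd d w z t a + d b c) (vd d w z t c + d a b) + 2 * δ := by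
    have h1 := hyp4 hh hd.symm w b a c
    have h2 := hyp4 hh hd.symm z b a c
    have s := hd.symm b a
    have a1 : d w a - t ≤ vd d w z t a := le_max_left _ _
    have a2 : d z a - (d w z - t) ≤ vd d w z t a := le_max_right _ _
    have c1 : d w c - t ≤ vd d w z t c := le_max_left _ _
    have c2 : d z c - (d w z - t) ≤ vd d w z t c := le_max_right _ _
    have m1 := le_max_left (vd d w z t a + d b c) (vd d w z t c + d a b)
    have m2 := le_max_right (vd d w z t a + d b c) (vd d w z t c + d a b)
    have b1 : vd d w z t b = d w b - t ∨ vd d w z t b = d z b - (d w z - t) := max_choice _ _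
    rcases b1 with b1 | b1 <;> rw [b1]
    · rcases max_choice (d w a + d b c) (d w c + d b a) with h | h <;> rw [h] at h1 <;> linarith
    · rcases max_choice (d z a + d b c) (d z c + d b a) with h | h <;> rw [h] at h2 <;> linarith
  rcases max_choice (vd d w z t a + d b c) (vd d w z t c + d a b) with h | h <;> rw [h] at key
  · refine (min_le_right _ _).trans ?_
    linarith
  · refine (min_le_left _ _).trans ?_
    linarith

theorem morse (hd : LIM d) (hδ : 0 ≤ δ) (hh : IsHyperbolicWith d δ) {Λ c : ℝ} (hΛ : 1 ≤ Λ)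
    (hc : 0 ≤ c) : ∃ D0 : ℝ, 0 ≤ D0 ∧ ∀ (m : ℕ) (q : ℕ → G),
      (∀ i j : ℕ, i ≤ m → j ≤ m → |(i : ℝ) - j| / Λ - c ≤ d (q i) (q j) ∧
        d (q i) (q j) ≤ Λ * |(i : ℝ) - j|) →
      ∀ t : ℝ, 0 ≤ t → t ≤ d (q 0) (q m) → ∃ j ≤ m, vd d (q 0) (q m) t (q j) ≤ D0 := by
  obtain ⟨k0, hk0⟩ := lin_le_two_pow (4 * Λ * 6 * (δ + 1))
    (4 * Λ * (6 * ((δ + 1) + 2 + Λ / 2) + 2 * δ + c))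
  refine ⟨(k0 + 3) * (δ + 1) + 2 + Λ / 2, by positivity, ?_⟩
  intro m q hq
  set w := q 0 with hw
  set z := q m with hz
  set L := d w z with hL
  set φ := vd d w z with hφ
  have hL0 : 0 ≤ L := hd.nonneg _ _
  have φw : ∀ t, 0 ≤ t → φ t w = t := by
    intro t ht
    simp only [hφ, vd, hd.refl, hd.symm z w]
    rw [max_eq_right] <;> linarith
  have φz : ∀ t, t ≤ L → φ t z = L - t := by
    intro t ht
    simp only [hφ, vd, hd.refl]
    rw [max_eq_left] <;> linarith
  have φ1 : ∀ t a, d w a - t ≤ φ t a := fun t a => le_max_left _ _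
  have φ2 : ∀ t a, d z a - (L - t) ≤ φ t a := fun t a => le_max_right _ _
  have φ0 : ∀ t a, 0 ≤ φ t a := by
    intro t a
    have := hd.triangle w a z
    rw [hd.symm a z] at this
    linarith [φ1 t a, φ2 t a]
  have φlip : ∀ s t a, φ t a ≤ φ s a + |s - t| := by
    intro s t a
    have h1 := le_abs_self (s - t)
    have h2 := neg_abs_le (s - t)
    refine max_le ?_ ?_
    · linarith [φ1 s a]
    · linarith [φ2 s a]
  have φd : ∀ t a b, d a b ≤ φ t a + φ t b + 2 * δ := by
    intro t a b
    have h := hyp4 hh hd.symm a b w z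
    have := φ1 t a; have := φ2 t a; have := φ1 t b; have := φ2 t b
    rw [hd.symm a w, hd.symm a z, hd.symm b w, hd.symm b z] at h
    rcases max_choice (d w a + d z b) (d z a + d w b) with h1 | h1 <;> rw [h1] at h <;> linarith
  set Hs : Set ℝ := {D' : ℝ | ∃ t, 0 ≤ t ∧ t ≤ L ∧ ∀ j ≤ m, D' ≤ φ t (q j)} with hHs
  have hbdd : BddAbove Hs := by
    refine ⟨L, ?_⟩
    rintro D' ⟨t, ht, htL, h⟩
    have := h 0 (Nat.zero_le _)
    rw [← hw, φw t ht] at this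
    linarith
  have hne : Hs.Nonempty := ⟨0, 0, le_rfl, hL0, fun j _ => φ0 _ _⟩
  set D := sSup Hs + 1 with hD
  have hD0 : 1 ≤ D := by
    have := le_csSup hbdd (show (0 : ℝ) ∈ Hs from ⟨0, le_rfl, hL0, fun j _ => φ0 _ _⟩)
    linarith
  have hall : ∀ s, 0 ≤ s → s ≤ L → ∃ j ≤ m, φ s (q j) ≤ D := by
    intro s hs hsL
    by_contra hcon
    push Not at hcon
    have : D ∈ Hs := ⟨s, hs, hsL, fun j hj => (hcon j hj).le⟩
    have := le_csSup hbdd this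
    linarith
  suffices hfin : D ≤ (k0 + 3) * (δ + 1) + 2 + Λ / 2 by
    intro t ht htL
    obtain ⟨j, hj, h⟩ := hall t ht htL
    exact ⟨j, hj, h.trans hfin⟩
  obtain ⟨E, ⟨t, ht, htL, hE⟩, hED⟩ := exists_lt_of_lt_csSup hne (show sSup Hs - 1 < sSup Hs by linarith)
  have hE' : D - 2 ≤ E := by linarith
  -- left point
  obtain ⟨j1, hj1, hj1φ, hj1g⟩ : ∃ j ≤ m, φ t (q j) ≤ 3 * D ∧
      D - 2 ≤ (φ t w + φ t (q j) - d w (q j)) / 2 := by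
    by_cases hcase : 0 ≤ t - 2 * D
    · obtain ⟨j, hj, h⟩ := hall (t - 2 * D) hcase (by linarith)
      refine ⟨j, hj, ?_, ?_⟩
      · have := φlip (t - 2 * D) t (q j)
        rw [show t - 2 * D - t = -(2 * D) by ring, abs_neg, abs_of_nonneg (by linarith)] at this
        linarith
      · rw [φw t ht]
        have h1 := φ1 (t - 2 * D) (q j)
        have h2 := φ2 t (q j)
        have h3 := hd.triangle w (q j) z
        rw [hd.symm (q j) z] at h3
        linarith
    · refine ⟨0, Nat.zero_le _, ?_, ?_⟩
      · rw [← hw, φw t ht]; linarith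
      · rw [← hw, hd.refl]
        have := hE 0 (Nat.zero_le _)
        rw [← hw] at this
        linarith
  obtain ⟨j2, hj2, hj2φ, hj2g⟩ : ∃ j ≤ m, φ t (q j) ≤ 3 * D ∧
      D - 2 ≤ (φ t (q j) + φ t z - d (q j) z) / 2 := by
    by_cases hcase : t + 2 * D ≤ L
    · obtain ⟨j, hj, h⟩ := hall (t + 2 * D) (by linarith) hcase
      refine ⟨j, hj, ?_, ?_⟩
      · have := φlip (t + 2 * D) t (q j)
        rw [show t + 2 * D - t = (2 * D) by ring, abs_of_nonneg (by linarith)] at this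
        linarith
      · rw [φz t htL]
        have h1 := φ1 t (q j)
        have h2 := φ2 (t + 2 * D) (q j)
        have h3 := hd.triangle w (q j) z
        rw [hd.symm (q j) z] at h3 ⊢
        linarith
    · refine ⟨m, le_rfl, ?_, ?_⟩
      · rw [← hz, φz t htL]; linarith
      · rw [← hz, hd.refl]
        have := hE m le_rfl
        rw [← hz] at this
        linarith
  by_contra hcon
  push Not at hcon
  set gg : G → G → ℝ := fun a b => (φ t a + φ t b - d a b) / 2 with hgg
  have ggs : ∀ a b, gg a b = gg b a := fun a b => by simp only [hgg, hd.symm a b]; ring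
  have ggh : ∀ a b c, min (gg a b) (gg b c) ≤ gg a c + δ := fun a b c => vd_hyp hd hh w z t a b c
  set n := ⌊(D - 2 - Λ / 2) / (δ + 1)⌋₊ with hn
  have hδ1 : 0 < δ + 1 := by linarith
  have hquot : (k0 : ℝ) + 3 ≤ (D - 2 - Λ / 2) / (δ + 1) := by
    rw [le_div_iff₀ hδ1]; linarith
  have hn3 : k0 + 3 ≤ n := Nat.le_floor (by push_cast; exact hquot)
  have hn1 : (n : ℝ) * (δ + 1) ≤ D - 2 - Λ / 2 := by
    rw [← le_div_iff₀ hδ1]; exact Nat.floor_le (by linarith [Nat.cast_nonneg (α := ℝ) k0])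
  have hn2 : D - 2 - Λ / 2 < (n + 1) * (δ + 1) := by
    rw [← div_lt_iff₀ hδ1]; exact Nat.lt_floor_add_one _
  have hpow := hk0 n (by omega)
  set B := D - 2 - Λ / 2 with hB
  clear_value n
  obtain ⟨k, rfl⟩ : ∃ k, n = k + 2 := ⟨n - 2, by omega⟩
  have hlink : ∀ j, j + 1 ≤ m → B ≤ gg (q j) (q (j + 1)) := by
    intro j hj
    have h1 := hE j (by omega)
    have h2 := hE (j + 1) hj
    have h3 := (hq j (j + 1) (by omega) hj).2
    have h4 : |(j : ℝ) - ((j + 1 : ℕ) : ℝ)| = 1 := by push_cast; simp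
    rw [h4] at h3
    simp only [hgg, hB]
    linarith
  have hN : |(j1 : ℝ) - j2| ≤ 2 ^ k := by
    have h1 := (hq j1 j2 hj1 hj2).1
    have h2 := φd t (q j1) (q j2)
    have h3 : |(j1 : ℝ) - j2| / Λ ≤ 6 * D + 2 * δ + c := by linarith
    rw [div_le_iff₀ (by linarith)] at h3
    have h4 : D ≤ (((k + 2 : ℕ) : ℝ) + 1) * (δ + 1) + 2 + Λ / 2 := by linarith
    have h5 : (6 * D + 2 * δ + c) * Λ ≤
        (6 * ((((k + 2 : ℕ) : ℝ) + 1) * (δ + 1) + 2 + Λ / 2) + 2 * δ + c) * Λ := by gcongr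
    have h6 : (2 : ℝ) ^ (k + 2) = 4 * 2 ^ k := by ring
    rw [h6] at hpow
    linarith
  have block : ∀ a b : ℕ, a ≤ b → b ≤ m → (b : ℝ) - a ≤ 2 ^ k → B - k * δ ≤ gg (q a) (q b) := by
    intro a b hab hbm hle
    rcases hab.eq_or_lt with rfl | hlt
    · have := hE a hbm
      have h2 : gg (q a) (q a) = φ t (q a) := by simp only [hgg, hd.refl]; ring
      rw [h2]
      have : 0 ≤ (k : ℝ) * δ := by positivity
      linarith
    · have hle' : b - a ≤ 2 ^ k := by
        have : ((b - a : ℕ) : ℝ) ≤ ((2 ^ k : ℕ) : ℝ) := by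
          rw [Nat.cast_sub hab]; push_cast; exact hle
        exact_mod_cast this
      have := chain_log (B := B) hδ ggh q k a (b - a) (by omega) hle'
        (fun j hj hj' => hlink j (by omega))
      rwa [show a + (b - a) = b by omega] at this
  have hblock : B - k * δ ≤ gg (q j1) (q j2) := by
    rcases le_total j1 j2 with h | h
    · refine block j1 j2 h hj2 ?_
      have := neg_abs_le ((j1 : ℝ) - j2); linarith
    · rw [ggs]
      refine block j2 j1 h hj1 ?_
      have := le_abs_self ((j1 : ℝ) - j2); linarith
  have hkδ : 0 ≤ (k : ℝ) * δ := by positivity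
  have g1 := ggh w (q j1) (q j2)
  have g2 := ggh w (q j2) z
  have g3 : gg w z = 0 := by
    simp only [hgg]; rw [φw t ht, φz t htL, ← hL]; ring
  have g4 : B - k * δ ≤ gg w (q j1) := by simp only [hgg]; linarith
  have g5 : B - k * δ ≤ gg (q j2) z := by simp only [hgg]; linarith
  have g6 := le_min g4 hblock
  have g7 : B - k * δ - δ ≤ min (gg w (q j2)) (gg (q j2) z) := le_min (by linarith) (by linarith)
  push_cast at hn1
  have : (0 : ℝ) ≤ k := Nat.cast_nonneg k
  nlinarith

end Morse

section HypAncona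

theorem hyp_ancona {S : Finset G} (hS : Generates S) {d : G → G → ℝ} (hd : LIM d)
    (hhyp : IsHyperbolic d) {Λ c : ℝ} (hΛ : 1 ≤ Λ) (hc : 0 ≤ c)
    (hq : ∀ x y, wordDist S x y / Λ - c ≤ d x y ∧ d x y ≤ Λ * wordDist S x y) :
    ∀ r : ℝ, 0 ≤ r → ∃ K : ℝ, ∀ x y v, NearWordGeodesic S x y v r →
      d x v + d v y ≤ d x y + K := by
  obtain ⟨δ, hδ, hh⟩ := hhyp
  obtain ⟨D0, hD0, hM⟩ := morse hd hδ hh hΛ hc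
  set τ := D0 + Λ * (Λ * (4 * D0 + 4 * δ + c)) with hτ
  intro r hr
  refine ⟨2 * τ + 2 * (Λ * r), ?_⟩
  rintro x y v ⟨n, p, hp, rfl, rfl, i, hin, hv⟩
  suffices hT : gromov d (p i) (p 0) (p n) ≤ τ by
    have h1 := (hq v (p i)).2
    have h2 : Λ * wordDist S v (p i) ≤ Λ * r := by gcongr
    have t1 := hd.triangle (p 0) (p i) v
    have t2 := hd.triangle v (p i) (p n)
    rw [hd.symm (p i) v] at t1
    unfold gromov at hT
    rw [hd.symm (p n) (p i)] at hT
    linarith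
  set T := gromov d (p i) (p 0) (p n) with hTd
  have hT0 : 0 ≤ T := gr_nonneg hd _ _ _
  have hTx : T ≤ d (p i) (p 0) := gr_le hd _ _ _
  have hTy : T ≤ d (p i) (p n) := by rw [hTd, gr_symm hd]; exact gr_le hd _ _ _
  obtain ⟨j, hj, ha⟩ := hM (n - i) (fun j => p (i + j)) (by
    intro a b ha hb
    have := hq (p (i + a)) (p (i + b))
    rw [hp (i + a) (i + b) (by omega) (by omega)] at this
    push_cast at this
    rwa [show (i : ℝ) + a - (i + b) = a - b by ring] at this) T hT0 (by
      simp only [add_zero]; rwa [show i + (n - i) = n by omega])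
  obtain ⟨k, hk, hb⟩ := hM i (fun j => p (i - j)) (by
    intro a b ha hb
    have := hq (p (i - a)) (p (i - b))
    rw [hp (i - a) (i - b) (by omega) (by omega), Nat.cast_sub ha, Nat.cast_sub hb] at this
    rwa [show (i : ℝ) - a - (i - b) = -(a - b) by ring, abs_neg] at this) T hT0 (by simpa using hTx)
  simp only [add_zero, show i + (n - i) = n by omega] at ha
  simp only [Nat.sub_zero, Nat.sub_self] at hb
  have ha1 := (le_max_left _ _).trans ha
  have ha2 := (le_max_right _ _).trans ha
  have hb1 := (le_max_left _ _).trans hb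
  have hb2 := (le_max_right _ _).trans hb
  set a := p (i + j) with had
  set b := p (i - k) with hbd
  set v' := p i with hv'
  set X := p 0
  set Y := p n
  -- distances
  have hva : T - D0 ≤ d v' a := by
    have := hd.triangle v' a Y
    rw [hd.symm a Y] at this
    linarith
  have hvb : T - D0 ≤ d v' b := by
    have := hd.triangle v' b X
    rw [hd.symm b X] at this
    linarith
  have g1 : T - D0 ≤ gromov d v' Y a := by
    unfold gromov
    rw [hd.symm Y v', hd.symm a v']
    linarith
  have g2 : T - D0 ≤ gromov d v' X b := by
    unfold gromov
    rw [hd.symm X v', hd.symm b v']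
    linarith
  have g3 : T - D0 - δ ≤ gromov d v' X a := by
    have := hh v' Y X a
    have h2 : T - D0 ≤ min (gromov d v' Y X) (gromov d v' Y a) :=
      le_min (by rw [gr_symm hd, ← hTd]; linarith) g1
    linarith
  have g4 : T - D0 - 2 * δ ≤ gromov d v' a b := by
    have := hh v' X a b
    have h2 : T - D0 - δ ≤ min (gromov d v' X a) (gromov d v' X b) := le_min g3 (by linarith)
    linarith
  have hab : d a b ≤ 4 * D0 + 4 * δ := by
    unfold gromov at g4
    rw [hd.symm a v', hd.symm b v'] at g4
    linarith
  have h5 := (hq a b).1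
  rw [had, hbd, hp (i + j) (i - k) (by omega) (by omega), Nat.cast_sub hk] at h5
  push_cast at h5
  rw [show (i : ℝ) + j - (i - k) = j + k by ring, abs_of_nonneg (by positivity)] at h5
  have h6 : ((j : ℝ) + k) / Λ ≤ 4 * D0 + 4 * δ + c := by linarith
  rw [div_le_iff₀ (by linarith)] at h6
  have h7 := (hq v' a).2
  rw [hv', had, hp i (i + j) hin (by omega)] at h7
  push_cast at h7
  rw [show (i : ℝ) - (i + j) = -j by ring, abs_neg, abs_of_nonneg (by positivity)] at h7
  have h8 : (j : ℝ) ≤ Λ * (4 * D0 + 4 * δ + c) := by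
    have : (0 : ℝ) ≤ k := Nat.cast_nonneg k
    linarith
  have h9 : Λ * (j : ℝ) ≤ Λ * (Λ * (4 * D0 + 4 * δ + c)) := by gcongr
  linarith

theorem main_aux (hG : NonElemHyperbolic G)
    (μ : G → ℝ) (hprob : IsProbDensity μ) (hsymm : IsSymmetric μ) (hgen : GeneratesSupp μ)
    (S : Finset G) (hS : Generates S)
    (hexp : HasExpMoment (wordDist S) μ) :
    MemD (greenDist μ) ↔
      ∀ r : ℝ, 0 ≤ r → ∃ C : ℝ, 0 < C ∧
        ∀ x y v : G, NearWordGeodesic S x y v r →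
          hitProb μ x y ≤ C * hitProb μ x v * hitProb μ v y := by
  obtain ⟨hpos, hmet, hinv, Λ, c, hΛ, hc, hq⟩ := green_facts hG μ hprob hsymm hgen S hS hexp
  have hd := green_LIM hmet hinv
  have hF : ∀ x y, hitProb μ x y = Real.exp (- greenDist μ x y) := fun x y => by
    rw [greenDist, neg_neg, Real.exp_log (hpos x y)]
  constructor
  · rintro ⟨_, _, hhyp, _⟩ r hr
    obtain ⟨K, hK⟩ := hyp_ancona hS hd hhyp hΛ hc hq r hr
    refine ⟨Real.exp K, Real.exp_pos _, fun x y v h => ?_⟩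
    rw [hF, hF, hF, ← Real.exp_add, ← Real.exp_add]
    apply Real.exp_le_exp.2
    linarith [hK x y v h]
  · intro hA
    obtain ⟨δ, hδ, hh⟩ := (hG.2.2 S hS).1
    refine ⟨hmet, hinv, ancona_hyp hS hδ hh hd ?_, S, hS, ?_⟩
    · intro r hr
      obtain ⟨C, hC, h⟩ := hA r hr
      refine ⟨Real.log C, fun x y v hn => ?_⟩
      have h1 := h x y v hn
      have h2 : C = Real.exp (Real.log C) := (Real.exp_log hC).symm
      rw [hF, hF, hF, h2, ← Real.exp_add, ← Real.exp_add] at h1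
      have := Real.exp_le_exp.1 h1
      linarith
    · have hΛ0 : 0 < Λ := by linarith
      refine ⟨id, Λ, Λ * c, 0, hΛ, by positivity, le_rfl, fun x y => ⟨?_, ?_⟩, fun y => ⟨y, ?_⟩⟩
      · have := (hq x y).2
        have h1 : greenDist μ x y / Λ ≤ wordDist S x y := by
          rw [div_le_iff₀ hΛ0]; linarith
        have : 0 ≤ Λ * c := by positivity
        simp only [id]
        linarith
      · have h1 := (hq x y).1
        have h2 : wordDist S x y / Λ ≤ greenDist μ x y + c := by linarith
        rw [div_le_iff₀ hΛ0] at h2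
        simp only [id]
        linarith
      · simp [(wordDist_LIM hS).refl]

end HypAncona

/-- **Theorem 1.1(i) (Blachère–Haïssinsky–Mathieu).**
Let `Γ` be a non-elementary hyperbolic group and `μ` a symmetric probability measure whose
support generates `Γ` and which has an exponential moment.  Then the Green metric `d_G`
belongs to `𝒟(Γ)` if and only if Ancona's inequality
`F(x,y) ≤ C(r) F(x,v) F(v,y)` holds whenever `v` is within distance `r` of a word geodesic
segment between `x` and `y`. -/
theorem green_metric_memD_iff_ancona
    {G : Type*} [Group G] (hG : NonElemHyperbolic G)
    (μ : G → ℝ) (hprob : IsProbDensity μ) (hsymm : IsSymmetric μ) (hgen : GeneratesSupp μ)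
    (S : Finset G) (hS : Generates S)
    (hexp : HasExpMoment (wordDist S) μ) :
    MemD (greenDist μ) ↔
      ∀ r : ℝ, 0 ≤ r → ∃ C : ℝ, 0 < C ∧
        ∀ x y v : G, NearWordGeodesic S x y v r →
          hitProb μ x y ≤ C * hitProb μ x v * hitProb μ v y := by
  exact main_aux hG μ hprob hsymm hgen S hS hexp

end GHM
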